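/- arXiv:2203.09851 — 5 statements merged into one kernel-verified Lean document; each statement's English description precedes it below -/
import Mathlib

section
/- For every Δt > 0 and every datum f : V → ℝ there exists a unique u : V → ℝ such that for all K ∈ V: (m K/Δt)·(u K − f K) + Σ_{L∈V} τ K L·(u K − u L) = 0. (This is the deterministic existence-and-uniqueness core of Proposition 2.1 for one time step of the semi-implicit finite-volume scheme.) -/
/-- One time step of the semi-implicit finite-volume scheme:
for every `Δt > 0` and every datum `f : V → ℝ` there exists a unique `u : V → ℝ`
such that for all `K ∈ V`:
`(m K / Δt) * (u K - f K) + Σ_{L∈V} τ K L * (u K - u L) = 0`. -/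
theorem discrete_step_existence_uniqueness
    {V : Type*} [Fintype V] [Nonempty V]
    (m : V → ℝ) (hm : ∀ K, 0 < m K)
    (τ : V → V → ℝ) (hτ_symm : ∀ K L, τ K L = τ L K)
    (hτ_nonneg : ∀ K L, 0 ≤ τ K L) (hτ_diag : ∀ K, τ K K = 0)
    (Δt : ℝ) (hΔt : 0 < Δt) (f : V → ℝ) :
    ∃! u : V → ℝ, ∀ K,
      m K / Δt * (u K - f K) + ∑ L, τ K L * (u K - u L) = 0 := by
  let A : (V → ℝ) →ₗ[ℝ] (V → ℝ) :=
    { toFun := fun u K => m K / Δt * u K + ∑ L, τ K L * (u K - u L)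
      map_add' := by
        intro u v
        funext K
        have h : ∑ L, τ K L * ((u K + v K) - (u L + v L))
            = ∑ L, τ K L * (u K - u L) + ∑ L, τ K L * (v K - v L) := by
          rw [← Finset.sum_add_distrib]
          exact Finset.sum_congr rfl fun L _ => by ring
        simp only [Pi.add_apply, h]
        ring
      map_smul' := by
        intro c u
        funext K
        have h : ∑ L, τ K L * (c * u K - c * u L) = c * ∑ L, τ K L * (u K - u L) := by
          rw [Finset.mul_sum]
          exact Finset.sum_congr rfl fun L _ => by ring
        simp only [Pi.smul_apply, smul_eq_mul, RingHom.id_apply, h]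
        ring }
  have hA : ∀ u K, A u K = m K / Δt * u K + ∑ L, τ K L * (u K - u L) := fun _ _ => rfl
  have hmax : ∀ w, A w = 0 → ∀ L, w L ≤ 0 := by
    intro w hw L
    obtain ⟨K, hK⟩ := Finite.exists_max w
    have h1 := congrFun hw K
    rw [hA, Pi.zero_apply] at h1
    have h2 : 0 ≤ ∑ L, τ K L * (w K - w L) :=
      Finset.sum_nonneg fun L _ => mul_nonneg (hτ_nonneg K L) (sub_nonneg.2 (hK L))
    have h3 : 0 < m K / Δt := div_pos (hm K) hΔt
    have h4 : w K ≤ 0 := by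
      by_contra h
      have := mul_pos h3 (not_le.1 h)
      linarith
    exact (hK L).trans h4
  have hinj : Function.Injective A := by
    rw [injective_iff_map_eq_zero]
    intro w hw
    funext L
    have h1 := hmax w hw L
    have h2 := hmax (-w) (by rw [map_neg, hw, neg_zero]) L
    simp only [Pi.neg_apply] at h2
    simp only [Pi.zero_apply]
    linarith
  have hsurj : Function.Surjective A := LinearMap.injective_iff_surjective.1 hinj
  have key : ∀ u : V → ℝ, (∀ K, m K / Δt * (u K - f K) + ∑ L, τ K L * (u K - u L) = 0) ↔
      A u = fun K => m K / Δt * f K := by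
    intro u
    rw [funext_iff]
    refine forall_congr' fun K => ?_
    rw [hA]
    constructor <;> intro h <;> linarith
  obtain ⟨u, hu⟩ := hsurj (fun K => m K / Δt * f K)
  exact ⟨u, (key u).2 hu, fun v hv => hinj (((key v).1 hv).trans hu.symm)⟩
end

section
/- A priori estimate for the scheme (Proposition 3.2): for all T > 0, L ≥ 0, g₀ ≥ 0, A > 0 and B ≥ 0 there exists a constant C₁ ≥ 0, depending only on T, L, g₀, A, B, such that for every integer N ≥ 1, every discrete setting (V, m, τ) with Σ_{K∈V} m K ≤ A, every g Lipschitz with constant L and |g(0)| ≤ g₀, every initial datum u⁰ with E[‖u⁰‖_m²] ≤ B, and the scheme solution (u^n)_{n=0,…,N}, one has for every n ∈ {1,…,N}: E[‖u^n‖_m²] + E[Σ_{k=0}^{n−1} ‖u^{k+1} − u^k‖_m²] + 2·Δt·Σ_{k=0}^{n−1} E[|u^{k+1}|₁²] ≤ C₁. -/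
open MeasureTheory ProbabilityTheory

/-- Discrete `L²` norm squared: `‖w‖_m² = Σ_K m K · (w K)²`. -/
noncomputable def normSq {V : Type} [Fintype V] (m : V → ℝ) (w : V → ℝ) : ℝ :=
  ∑ K, m K * w K ^ 2

/-- Discrete `H¹` seminorm squared: `|w|₁² = (1/2) Σ_K Σ_L τ K L · (w K − w L)²`. -/
noncomputable def seminormSq {V : Type} [Fintype V] (τ : V → V → ℝ) (w : V → ℝ) : ℝ :=
  (1 / 2) * ∑ K, ∑ L, τ K L * (w K - w L) ^ 2

/-- The semi-implicit finite-volume scheme for the stochastic heat equation, in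
abstract graph form, together with all the structural assumptions of the paper:
cell measures `m`, symmetric nonnegative transmissibilities `τ`, time horizon
`T > 0` divided into `N ≥ 1` steps of size `Δt = T/N`, a discrete filtration
`G`, Gaussian increments `ΔW` (each `ΔW (n+1)` is `G (n+1)`-measurable,
independent of `G n`, centred with variance `Δt`), a Lipschitz nonlinearity `g`
(constant `L`), a square-integrable `G 0`-measurable initial datum `u 0`, and the
scheme equations defining `u (n+1)` from `u n`. -/
structure Scheme (V : Type) [Fintype V] [Nonempty V]
    (Ω : Type) [mΩ : MeasurableSpace Ω]
    (T L : ℝ) (g : ℝ → ℝ) (N : ℕ) where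
  P : Measure Ω
  probP : IsProbabilityMeasure P
  m : V → ℝ
  m_pos : ∀ K, 0 < m K
  τ : V → V → ℝ
  τ_symm : ∀ K L', τ K L' = τ L' K
  τ_nonneg : ∀ K L', 0 ≤ τ K L'
  τ_diag : ∀ K, τ K K = 0
  T_pos : 0 < T
  N_pos : 1 ≤ N
  L_nonneg : 0 ≤ L
  g_lip : ∀ r s : ℝ, |g r - g s| ≤ L * |r - s|
  G : ℕ → MeasurableSpace Ω
  G_le : ∀ n, G n ≤ mΩ
  G_mono : Monotone G
  ΔW : ℕ → Ω → ℝ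
  ΔW_meas : ∀ n, n < N → Measurable[G (n + 1)] (ΔW (n + 1))
  ΔW_indep : ∀ n, n < N →
    Indep (MeasurableSpace.comap (ΔW (n + 1)) Real.measurableSpace) (G n) P
  ΔW_law : ∀ n, n < N →
    P.map (ΔW (n + 1)) = gaussianReal 0 (Real.toNNReal (T / N))
  u : ℕ → Ω → V → ℝ
  u_meas : ∀ n, n ≤ N → Measurable[G n] (u n)
  u0_int : Integrable (fun ω => normSq m (u 0 ω)) P
  scheme : ∀ n, n < N → ∀ᵐ ω ∂P, ∀ K,
    m K / (T / N) * (u (n + 1) ω K - u n ω K)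
      + ∑ L', τ K L' * (u (n + 1) ω K - u (n + 1) ω L')
      = m K / (T / N) * g (u n ω K) * ΔW (n + 1) ω


lemma aux_symm {V : Type} [Fintype V] (τ : V → V → ℝ) (hs : ∀ K L, τ K L = τ L K) (v : V → ℝ) :
    ∑ K, (∑ L, τ K L * (v K - v L)) * v K = seminormSq τ v := by
  unfold seminormSq
  have h1 : ∑ K, (∑ L, τ K L * (v K - v L)) * v K = ∑ K, ∑ L, τ K L * (v K - v L) * v K := by
    simp_rw [Finset.sum_mul]
  have h2 : ∑ K, ∑ L, τ K L * (v K - v L) * v K = ∑ K, ∑ L, τ K L * (v L - v K) * v L := by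
    rw [Finset.sum_comm]
    refine Finset.sum_congr rfl fun K _ => Finset.sum_congr rfl fun L _ => ?_
    rw [hs L K]
  have h3 : ∑ K, ∑ L, τ K L * (v K - v L) ^ 2
      = ∑ K, ∑ L, τ K L * (v K - v L) * v K + ∑ K, ∑ L, τ K L * (v L - v K) * v L := by
    rw [← Finset.sum_add_distrib]
    refine Finset.sum_congr rfl fun K _ => ?_
    rw [← Finset.sum_add_distrib]
    refine Finset.sum_congr rfl fun L _ => ?_
    ring
  rw [h1, h3, ← h2]; ring

lemma aux_path {V : Type} [Fintype V] (m : V → ℝ) (hm : ∀ K, 0 < m K)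
    (τ : V → V → ℝ) (hs : ∀ K L, τ K L = τ L K) (δ : ℝ) (hδ : 0 < δ) (u v q : V → ℝ)
    (h : ∀ K, m K / δ * (v K - u K) + ∑ L, τ K L * (v K - v L) = m K / δ * q K) :
    normSq m v + (1 / 2) * normSq m (fun K => v K - u K) + 2 * δ * seminormSq τ v
      ≤ normSq m u + 2 * (∑ K, m K * (q K) ^ 2) + 2 * ∑ K, m K * (q K * u K) := by
  rw [← aux_symm τ hs v]
  unfold normSq
  simp only [Finset.mul_sum, ← Finset.sum_add_distrib]
  refine Finset.sum_le_sum fun K _ => ?_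
  have h1 := h K
  have h2 : m K * (v K - u K) + δ * ∑ L, τ K L * (v K - v L) = m K * q K := by
    field_simp at h1
    linarith
  have h3 : δ * ∑ L, τ K L * (v K - v L) = m K * q K - m K * (v K - u K) := by linarith
  have h4 : 2 * δ * ((∑ L, τ K L * (v K - v L)) * v K)
      = 2 * (m K * q K - m K * (v K - u K)) * v K := by
    rw [← h3]; ring
  rw [h4]
  have := mul_nonneg (hm K).le (sq_nonneg (q K - (1 / 2) * (v K - u K)))
  nlinarith [this]

lemma aux_gronwall (N : ℕ) (c b M : ℝ) (hc : 0 ≤ c) (hb : 0 ≤ b) (a : ℕ → ℝ)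
    (h0 : a 0 ≤ M) (hM : 0 ≤ M)
    (h : ∀ n, n < N → a (n + 1) ≤ (1 + c) * a n + b) :
    ∀ n, n ≤ N → a n ≤ Real.exp (n * c) * (M + n * b) := by
  intro n
  induction n with
  | zero => intro _; simpa using h0
  | succ k ih =>
    intro hk
    have h1 := h k (by omega)
    have h2 := ih (by omega)
    have e1 : 1 + c ≤ Real.exp c := by linarith [Real.add_one_le_exp c]
    have e2 : Real.exp ((k + 1 : ℕ) * c) = Real.exp c * Real.exp (k * c) := by
      rw [← Real.exp_add]; congr 1; push_cast; ring
    have e3 : 0 ≤ Real.exp (k * c) * (M + k * b) := by positivity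
    have e4 : 1 ≤ Real.exp c * Real.exp (k * c) := by
      rw [← e2]; apply Real.one_le_exp; positivity
    calc a (k + 1) ≤ (1 + c) * a k + b := h1
      _ ≤ (1 + c) * (Real.exp (k * c) * (M + k * b)) + b := by gcongr
      _ ≤ Real.exp c * (Real.exp (k * c) * (M + k * b)) + (Real.exp c * Real.exp (k * c)) * b := by
        have := mul_le_mul_of_nonneg_right e1 e3
        have := mul_le_mul_of_nonneg_right e4 hb
        linarith
      _ = _ := by rw [e2]; push_cast; ring

section
variable {V : Type} [Fintype V] [Nonempty V] {Ω : Type} [mΩ : MeasurableSpace Ω]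
  {T L : ℝ} {g : ℝ → ℝ} {N : ℕ}

lemma Scheme.dt_pos (S : Scheme V Ω T L g N) : 0 < T / N := by
  have := S.N_pos
  exact div_pos S.T_pos (by exact_mod_cast this)

lemma Scheme.g_cont (S : Scheme V Ω T L g N) : Continuous g := by
  have : LipschitzWith ⟨L, S.L_nonneg⟩ g := by
    apply LipschitzWith.of_dist_le_mul
    intro x y
    rw [Real.dist_eq, Real.dist_eq]; exact S.g_lip x y
  exact this.continuous

lemma Scheme.uK_meas (S : Scheme V Ω T L g N) {n : ℕ} (hn : n ≤ N) (K : V) :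
    Measurable[S.G n] (fun ω => S.u n ω K) :=
  (measurable_pi_apply K).comp (S.u_meas n hn)

lemma Scheme.indep_fun (S : Scheme V Ω T L g N) {n : ℕ} (hn : n < N) {X : Ω → ℝ}
    (hX : Measurable[S.G n] X) : IndepFun X (S.ΔW (n + 1)) S.P := by
  rw [IndepFun_iff_Indep]
  exact (indep_of_indep_of_le_right (S.ΔW_indep n hn) hX.comap_le).symm

lemma Scheme.dW_meas (S : Scheme V Ω T L g N) {n : ℕ} (hn : n < N) :
    Measurable (S.ΔW (n + 1)) := (S.ΔW_meas n hn).mono (S.G_le _) le_rfl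

lemma Scheme.dW_memLp (S : Scheme V Ω T L g N) {n : ℕ} (hn : n < N) :
    MemLp (S.ΔW (n + 1)) 2 S.P := by
  have h : MemLp id 2 (S.P.map (S.ΔW (n + 1))) := by
    rw [S.ΔW_law n hn]
    exact memLp_id_gaussianReal 2
  exact (memLp_map_measure_iff aestronglyMeasurable_id (S.dW_meas hn).aemeasurable).1 h

lemma Scheme.dW_mean (S : Scheme V Ω T L g N) {n : ℕ} (hn : n < N) :
    ∫ ω, S.ΔW (n + 1) ω ∂S.P = 0 := by
  have h : ∫ x, x ∂(S.P.map (S.ΔW (n + 1))) = 0 := by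
    rw [S.ΔW_law n hn]; simp
  rwa [integral_map (S.dW_meas hn).aemeasurable (by fun_prop)] at h

lemma Scheme.dW_sq (S : Scheme V Ω T L g N) {n : ℕ} (hn : n < N) :
    ∫ ω, S.ΔW (n + 1) ω ^ 2 ∂S.P = T / N := by
  have h : ∫ x, x ^ 2 ∂(S.P.map (S.ΔW (n + 1))) = T / N := by
    rw [S.ΔW_law n hn]
    have h1 := variance_of_integral_eq_zero (μ := gaussianReal 0 (Real.toNNReal (T / N)))
      (X := id) aemeasurable_id (by simp)
    rw [variance_id_gaussianReal] at h1
    rw [Real.coe_toNNReal _ S.dt_pos.le] at h1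
    simpa using h1.symm
  rwa [integral_map (S.dW_meas hn).aemeasurable (by fun_prop)] at h

lemma Scheme.g_memLp (S : Scheme V Ω T L g N) {n : ℕ} (hn : n ≤ N) (K : V)
    (hu : MemLp (fun ω => S.u n ω K) 2 S.P) : MemLp (fun ω => g (S.u n ω K)) 2 S.P := by
  haveI := S.probP
  have hc : MemLp (fun _ : Ω => |g 0|) 2 S.P := memLp_const _
  have h2 := hc.add (hu.norm.const_mul L)
  refine h2.mono' ?_ ?_
  · exact (S.g_cont.measurable.comp
      ((S.uK_meas hn K).mono (S.G_le _) le_rfl)).aestronglyMeasurable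
  · refine Filter.Eventually.of_forall fun ω => ?_
    have h1 := S.g_lip (S.u n ω K) 0
    have h3 := abs_sub_abs_le_abs_sub (g (S.u n ω K)) (g 0)
    simp only [Pi.add_apply, Real.norm_eq_abs, sub_zero] at *
    linarith

lemma Scheme.prod_facts (S : Scheme V Ω T L g N) {n : ℕ} (hn : n < N) {X Y : Ω → ℝ}
    (hX : Measurable[S.G n] X) (hX2 : MemLp X 2 S.P)
    (hY : Measurable[S.G n] Y) (hY2 : MemLp Y 2 S.P) :
    (Integrable (fun ω => (X ω * S.ΔW (n + 1) ω) ^ 2) S.P ∧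
    ∫ ω, (X ω * S.ΔW (n + 1) ω) ^ 2 ∂S.P = (T / N) * ∫ ω, X ω ^ 2 ∂S.P) ∧
    Integrable (fun ω => X ω * S.ΔW (n + 1) ω * Y ω) S.P ∧
    ∫ ω, X ω * S.ΔW (n + 1) ω * Y ω ∂S.P = 0 := by
  haveI := S.probP
  have hW := S.dW_memLp hn
  have i1 : IndepFun (fun ω => X ω ^ 2) (fun ω => S.ΔW (n + 1) ω ^ 2) S.P :=
    (S.indep_fun hn hX).comp (φ := fun x : ℝ => x ^ 2) (ψ := fun x : ℝ => x ^ 2)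
      (by fun_prop) (by fun_prop)
  have i2 : IndepFun (fun ω => X ω * Y ω) (S.ΔW (n + 1)) S.P :=
    S.indep_fun hn (hX.mul hY)
  have hXY : Integrable (fun ω => X ω * Y ω) S.P := hX2.integrable_mul hY2
  have e1 : (fun ω => (X ω * S.ΔW (n + 1) ω) ^ 2)
    = (fun ω => X ω ^ 2) * (fun ω => S.ΔW (n + 1) ω ^ 2) := by
    funext ω; simp [mul_pow]
  have e2 : (fun ω => X ω * S.ΔW (n + 1) ω * Y ω)
    = (fun ω => X ω * Y ω) * (S.ΔW (n + 1)) := by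
    funext ω; simp; ring
  refine ⟨⟨?_, ?_⟩, ?_, ?_⟩
  · rw [e1]; exact i1.integrable_mul hX2.integrable_sq hW.integrable_sq
  · rw [e1, i1.integral_mul_eq_mul_integral hX2.integrable_sq.aestronglyMeasurable
      hW.integrable_sq.aestronglyMeasurable, S.dW_sq hn, mul_comm]
  · rw [e2]; exact i2.integrable_mul hXY (hW.integrable (by norm_num))
  · rw [e2, i2.integral_mul_eq_mul_integral hXY.aestronglyMeasurable
      hW.aestronglyMeasurable, S.dW_mean hn, mul_zero]

lemma Scheme.path (S : Scheme V Ω T L g N) {n : ℕ} (hn : n < N) :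
    ∀ᵐ ω ∂S.P, normSq S.m (S.u (n + 1) ω)
      + (1 / 2) * normSq S.m (fun K => S.u (n + 1) ω K - S.u n ω K)
      + 2 * (T / N) * seminormSq S.τ (S.u (n + 1) ω)
      ≤ normSq S.m (S.u n ω) + 2 * (∑ K, S.m K * (g (S.u n ω K) * S.ΔW (n + 1) ω) ^ 2)
        + 2 * ∑ K, S.m K * (g (S.u n ω K) * S.ΔW (n + 1) ω * S.u n ω K) := by
  filter_upwards [S.scheme n hn] with ω h
  refine aux_path S.m S.m_pos S.τ S.τ_symm _ S.dt_pos _ _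
    (fun K => g (S.u n ω K) * S.ΔW (n + 1) ω) fun K => ?_
  rw [h K]; ring

lemma Scheme.normSq_nonneg (S : Scheme V Ω T L g N) (w : V → ℝ) : 0 ≤ normSq S.m w :=
  Finset.sum_nonneg fun K _ => mul_nonneg (S.m_pos K).le (sq_nonneg _)

lemma Scheme.semi_nonneg (S : Scheme V Ω T L g N) (w : V → ℝ) : 0 ≤ seminormSq S.τ w :=
  mul_nonneg (by norm_num) (Finset.sum_nonneg fun K _ => Finset.sum_nonneg fun K' _ =>
    mul_nonneg (S.τ_nonneg K K') (sq_nonneg _))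

lemma Scheme.memLp_of_normSq_le (S : Scheme V Ω T L g N) {n : ℕ} (hn : n ≤ N) {F : Ω → ℝ}
    (hF : Integrable F S.P) (h : ∀ᵐ ω ∂S.P, normSq S.m (S.u n ω) ≤ F ω) (K : V) :
    MemLp (fun ω => S.u n ω K) 2 S.P := by
  have hm : AEStronglyMeasurable (fun ω => S.u n ω K) S.P :=
    ((S.uK_meas hn K).mono (S.G_le _) le_rfl).aestronglyMeasurable
  rw [memLp_two_iff_integrable_sq hm]
  refine (hF.const_mul (S.m K)⁻¹).mono' (hm.pow 2) ?_
  filter_upwards [h] with ω h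
  have h1 : S.m K * S.u n ω K ^ 2 ≤ normSq S.m (S.u n ω) :=
    Finset.single_le_sum (f := fun K => S.m K * S.u n ω K ^ 2)
      (fun K _ => mul_nonneg (S.m_pos K).le (sq_nonneg _)) (Finset.mem_univ K)
  have := S.m_pos K
  rw [Real.norm_eq_abs, abs_of_nonneg (by positivity), le_inv_mul_iff₀ this]
  linarith

lemma Scheme.int_normSq (S : Scheme V Ω T L g N) {w : Ω → V → ℝ}
    (h : ∀ K, MemLp (fun ω => w ω K) 2 S.P) : Integrable (fun ω => normSq S.m (w ω)) S.P :=
  integrable_finsetSum _ fun K _ => (h K).integrable_sq.const_mul _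

lemma Scheme.int_semi (S : Scheme V Ω T L g N) {w : Ω → V → ℝ}
    (h : ∀ K, MemLp (fun ω => w ω K) 2 S.P) : Integrable (fun ω => seminormSq S.τ (w ω)) S.P :=
  (integrable_finsetSum _ fun K _ => integrable_finsetSum _ fun K' _ =>
    (((h K).sub (h K')).integrable_sq.const_mul _)).const_mul _

lemma Scheme.u_memLp (S : Scheme V Ω T L g N) :
    ∀ n, n ≤ N → ∀ K, MemLp (fun ω => S.u n ω K) 2 S.P := by
  intro n
  induction n with
  | zero =>
    intro hn
    exact S.memLp_of_normSq_le hn S.u0_int (Filter.Eventually.of_forall fun ω => le_rfl)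
  | succ n ih =>
    intro hn
    have hn' : n < N := hn
    have ih := ih hn'.le
    have pf := fun K => S.prod_facts hn' (S.g_cont.measurable.comp (S.uK_meas hn'.le K))
      (S.g_memLp hn'.le K (ih K)) (S.uK_meas hn'.le K) (ih K)
    refine S.memLp_of_normSq_le hn (((S.int_normSq ih).add
      ((integrable_finsetSum Finset.univ fun K _ => (pf K).1.1.const_mul (S.m K)).const_mul 2)).add
      ((integrable_finsetSum Finset.univ fun K _ =>
        (pf K).2.1.const_mul (S.m K)).const_mul 2)) ?_
    filter_upwards [S.path hn'] with ω h
    have h1 := S.normSq_nonneg (fun K => S.u (n + 1) ω K - S.u n ω K)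
    have h2 := mul_nonneg (mul_nonneg zero_le_two S.dt_pos.le) (S.semi_nonneg (S.u (n + 1) ω))
    simp only [Pi.add_apply, Function.comp_apply]
    linarith

lemma Scheme.step (S : Scheme V Ω T L g N) {g₀ A : ℝ} (hg : |g 0| ≤ g₀)
    (hA : ∑ K, S.m K ≤ A) {n : ℕ} (hn : n < N) :
    ∫ ω, normSq S.m (S.u (n + 1) ω) ∂S.P
      + (1 / 2) * ∫ ω, normSq S.m (fun K => S.u (n + 1) ω K - S.u n ω K) ∂S.P
      + 2 * (T / N) * ∫ ω, seminormSq S.τ (S.u (n + 1) ω) ∂S.P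
      ≤ ∫ ω, normSq S.m (S.u n ω) ∂S.P
        + (T / N) * (4 * L ^ 2 * ∫ ω, normSq S.m (S.u n ω) ∂S.P + 4 * g₀ ^ 2 * A) := by
  haveI := S.probP
  have ih := S.u_memLp n hn.le
  have ih1 := S.u_memLp (n + 1) hn
  have gm := fun K => S.g_memLp hn.le K (ih K)
  have pf := fun K => S.prod_facts hn (S.g_cont.measurable.comp (S.uK_meas hn.le K))
      (gm K) (S.uK_meas hn.le K) (ih K)
  simp only [Function.comp_apply] at pf
  have I1 := S.int_normSq ih1
  have I2 := S.int_normSq (w := fun ω K => S.u (n + 1) ω K - S.u n ω K)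
    fun K => (ih1 K).sub (ih K)
  have I3 := S.int_semi ih1
  have I4 := S.int_normSq ih
  have I5 := integrable_finsetSum Finset.univ fun K _ => (pf K).1.1.const_mul (S.m K)
  have I6 := integrable_finsetSum Finset.univ fun K _ => (pf K).2.1.const_mul (S.m K)
  have key := integral_mono_ae ((I1.add (I2.const_mul (1 / 2))).add (I3.const_mul (2 * (T / N))))
    ((I4.add (I5.const_mul 2)).add (I6.const_mul 2)) (S.path hn)
  rw [integral_add' (I1.add (I2.const_mul (1 / 2))) (I3.const_mul (2 * (T / N))),
    integral_add' I1 (I2.const_mul (1 / 2)),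
    integral_add' (I4.add (I5.const_mul 2)) (I6.const_mul 2),
    integral_add' I4 (I5.const_mul 2)] at key
  simp only [integral_const_mul] at key
  rw [integral_finsetSum _ fun K _ => (pf K).1.1.const_mul (S.m K),
    integral_finsetSum _ fun K _ => (pf K).2.1.const_mul (S.m K)] at key
  simp only [integral_const_mul, (pf _).1.2, (pf _).2.2, mul_zero, Finset.sum_const_zero,
    add_zero] at key
  refine key.trans ?_
  have hg2 : ∑ K, S.m K * ∫ ω, g (S.u n ω K) ^ 2 ∂S.P
      ≤ 2 * L ^ 2 * ∫ ω, normSq S.m (S.u n ω) ∂S.P + 2 * g₀ ^ 2 * A := by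
    have hb : ∀ K, ∫ ω, g (S.u n ω K) ^ 2 ∂S.P
        ≤ 2 * L ^ 2 * ∫ ω, S.u n ω K ^ 2 ∂S.P + 2 * g₀ ^ 2 := by
      intro K
      have := integral_mono (gm K).integrable_sq
        (((ih K).integrable_sq.const_mul (2 * L ^ 2)).add (integrable_const (2 * g₀ ^ 2)))
        (fun ω => by
          have h1 := S.g_lip (S.u n ω K) 0
          have h3 := abs_sub_abs_le_abs_sub (g (S.u n ω K)) (g 0)
          simp only [Pi.add_apply, sub_zero] at *
          have h4 : |g (S.u n ω K)| ≤ L * |S.u n ω K| + g₀ := by linarith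
          have h5 := pow_le_pow_left₀ (abs_nonneg _) h4 2
          rw [sq_abs] at h5
          have h6 := sq_abs (S.u n ω K)
          rw [← h6]
          nlinarith [sq_nonneg (L * |S.u n ω K| - g₀)])
      rw [integral_add' ((ih K).integrable_sq.const_mul (2 * L ^ 2))
        (integrable_const (2 * g₀ ^ 2))] at this
      simpa [integral_const_mul] using this
    have hn : ∫ ω, normSq S.m (S.u n ω) ∂S.P = ∑ K, S.m K * ∫ ω, S.u n ω K ^ 2 ∂S.P := by
      unfold normSq
      rw [integral_finsetSum _ fun K _ => (ih K).integrable_sq.const_mul _]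
      simp only [integral_const_mul]
    calc _ ≤ ∑ K, S.m K * (2 * L ^ 2 * ∫ ω, S.u n ω K ^ 2 ∂S.P + 2 * g₀ ^ 2) :=
          Finset.sum_le_sum fun K _ => mul_le_mul_of_nonneg_left (hb K) (S.m_pos K).le
      _ = 2 * L ^ 2 * ∑ K, S.m K * ∫ ω, S.u n ω K ^ 2 ∂S.P + 2 * g₀ ^ 2 * ∑ K, S.m K := by
          rw [Finset.mul_sum, Finset.mul_sum, ← Finset.sum_add_distrib]
          exact Finset.sum_congr rfl fun K _ => by ring
      _ ≤ _ := by rw [hn]; gcongr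
  have e : ∑ K, S.m K * (T / N * ∫ ω, g (S.u n ω K) ^ 2 ∂S.P)
      = (T / N) * ∑ K, S.m K * ∫ ω, g (S.u n ω K) ^ 2 ∂S.P := by
    rw [Finset.mul_sum]; exact Finset.sum_congr rfl fun K _ => by ring
  rw [e]
  have := mul_le_mul_of_nonneg_left hg2 S.dt_pos.le
  linarith

end

/-- **Proposition 3.2, a priori estimate.** For all `T > 0`, `L ≥ 0`,
`g₀ ≥ 0`, `A > 0`, `B ≥ 0` there is a constant `C₁ ≥ 0`, depending only on
`T, L, g₀, A, B`, such that for every scheme (with total mass `Σ m K ≤ A`,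
`|g 0| ≤ g₀`, `E[‖u⁰‖_m²] ≤ B`) and every `n ∈ {1,…,N}`:
`E[‖uⁿ‖_m²] + E[Σ_{k<n} ‖u^{k+1}−u^k‖_m²] + 2Δt Σ_{k<n} E[|u^{k+1}|₁²] ≤ C₁`. -/
theorem apriori_estimate (T L g₀ A B : ℝ)
    (hT : 0 < T) (hL : 0 ≤ L) (hg₀ : 0 ≤ g₀) (hA : 0 < A) (hB : 0 ≤ B) :
    ∃ C₁ : ℝ, 0 ≤ C₁ ∧
      ∀ (V : Type) [Fintype V] [Nonempty V]
        (Ω : Type) [MeasurableSpace Ω] (g : ℝ → ℝ) (N : ℕ)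
        (S : Scheme V Ω T L g N),
        |g 0| ≤ g₀ → (∑ K, S.m K) ≤ A →
        (∫ ω, normSq S.m (S.u 0 ω) ∂S.P) ≤ B →
        ∀ n, 1 ≤ n → n ≤ N →
          (∫ ω, normSq S.m (S.u n ω) ∂S.P)
            + (∫ ω, ∑ k ∈ Finset.range n,
                normSq S.m (fun K => S.u (k + 1) ω K - S.u k ω K) ∂S.P)
            + 2 * (T / N) * ∑ k ∈ Finset.range n,
                ∫ ω, seminormSq S.τ (S.u (k + 1) ω) ∂S.P
          ≤ C₁ := by
  set M : ℝ := Real.exp (4 * L ^ 2 * T) * (B + 4 * g₀ ^ 2 * A * T) with hM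
  have hM0 : 0 ≤ M := by positivity
  refine ⟨2 * (B + T * (4 * L ^ 2 * M + 4 * g₀ ^ 2 * A)), by positivity, ?_⟩
  intro V _ _ Ω _ g N S hg hmA hu0 n _ hn
  have hdt := S.dt_pos
  have hNpos : (0 : ℝ) < N := by exact_mod_cast S.N_pos
  set a : ℕ → ℝ := fun n => ∫ ω, normSq S.m (S.u n ω) ∂S.P with ha
  set d : ℕ → ℝ := fun n => ∫ ω, normSq S.m (fun K => S.u (n + 1) ω K - S.u n ω K) ∂S.P with hd
  set s : ℕ → ℝ := fun n => ∫ ω, seminormSq S.τ (S.u (n + 1) ω) ∂S.P with hs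
  have a0 : ∀ n, 0 ≤ a n := fun n => integral_nonneg fun ω => S.normSq_nonneg _
  have d0 : ∀ n, 0 ≤ d n := fun n => integral_nonneg fun ω => S.normSq_nonneg _
  have s0 : ∀ n, 0 ≤ s n := fun n => integral_nonneg fun ω => S.semi_nonneg _
  have st : ∀ n, n < N → a (n + 1) + (1 / 2) * d n + 2 * (T / N) * s n
      ≤ a n + (T / N) * (4 * L ^ 2 * a n + 4 * g₀ ^ 2 * A) :=
    fun n hn => S.step hg hmA hn
  have hle : ∀ k, k ≤ N → (k : ℝ) * (T / N) ≤ T := by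
    intro k hk
    have : (k : ℝ) ≤ N := by exact_mod_cast hk
    calc (k : ℝ) * (T / N) ≤ N * (T / N) := by gcongr
      _ = T := by field_simp
  have aM : ∀ k, k ≤ N → a k ≤ M := by
    intro k hk
    have h1 := aux_gronwall N (T / N * (4 * L ^ 2)) (T / N * (4 * g₀ ^ 2 * A)) B
      (by positivity) (by positivity) a hu0 hB (fun n hn => by
        have := st n hn
        have := d0 n
        have := mul_nonneg (mul_nonneg zero_le_two hdt.le) (s0 n)
        linarith) k hk
    refine h1.trans ?_
    have h2 := hle k hk
    rw [hM]
    have e1 : (k : ℝ) * (T / N * (4 * L ^ 2)) ≤ 4 * L ^ 2 * T := by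
      have := mul_le_mul_of_nonneg_right h2 (by positivity : 0 ≤ 4 * L ^ 2)
      linarith
    have e2 : (k : ℝ) * (T / N * (4 * g₀ ^ 2 * A)) ≤ 4 * g₀ ^ 2 * A * T := by
      have := mul_le_mul_of_nonneg_right h2 (by positivity : 0 ≤ 4 * g₀ ^ 2 * A)
      linarith
    gcongr
  have hsum : ∀ k, k ≤ N → a k + (1 / 2) * ∑ j ∈ Finset.range k, d j
      + 2 * (T / N) * ∑ j ∈ Finset.range k, s j
      ≤ B + k * (T / N) * (4 * L ^ 2 * M + 4 * g₀ ^ 2 * A) := by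
    intro k
    induction k with
    | zero => intro _; simpa using hu0
    | succ k ih =>
      intro hk
      have h1 := ih (by omega)
      have h2 := st k hk
      have h3 : (T / N) * (4 * L ^ 2 * a k + 4 * g₀ ^ 2 * A)
          ≤ (T / N) * (4 * L ^ 2 * M + 4 * g₀ ^ 2 * A) := by
        have := aM k (by omega)
        gcongr
      rw [Finset.sum_range_succ, Finset.sum_range_succ]
      push_cast
      linarith
  have hint : (∫ ω, ∑ k ∈ Finset.range n,
      normSq S.m (fun K => S.u (k + 1) ω K - S.u k ω K) ∂S.P) = ∑ k ∈ Finset.range n, d k := by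
    rw [integral_finsetSum]
    intro k hk
    have hk := Finset.mem_range.1 hk
    exact S.int_normSq (w := fun ω K => S.u (k + 1) ω K - S.u k ω K)
      fun K => (S.u_memLp (k + 1) (by omega) K).sub (S.u_memLp k (by omega) K)
  rw [hint]
  have h1 := hsum n hn
  have h2 := mul_le_mul_of_nonneg_right (hle n hn)
    (by positivity : 0 ≤ 4 * L ^ 2 * M + 4 * g₀ ^ 2 * A)
  have h3 := a0 n
  have h4 : 0 ≤ 2 * (T / N) * ∑ j ∈ Finset.range n, s j :=
    mul_nonneg (mul_nonneg zero_le_two hdt.le) (Finset.sum_nonneg fun j _ => s0 j)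
  change a n + ∑ k ∈ Finset.range n, d k + 2 * (T / N) * ∑ k ∈ Finset.range n, s k ≤ _
  linarith
end

section
/- Discrete Gronwall bound for the scheme: if C_L ≥ 0 is any constant such that |g(r)|² ≤ C_L·(1 + r²) for all r ∈ ℝ, and A = Σ_{K∈V} m K, then for every n ∈ {1,…,N} the scheme solution satisfies E[‖u^n‖_m²] ≤ ((1 + 2·C_L·T)·E[‖u⁰‖_m²] + 2·C_L·A·T)·exp(2·C_L·T). -/
open MeasureTheory ProbabilityTheory

lemma contraction_aux {V : Type} [Fintype V] (m : V → ℝ) (hm : ∀ K, 0 < m K)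
    (τ : V → V → ℝ) (hs : ∀ K L, τ K L = τ L K) (hn : ∀ K L, 0 ≤ τ K L)
    (dt : ℝ) (hdt : 0 < dt) (v w b : V → ℝ)
    (h : ∀ K, m K / dt * (v K - w K) + ∑ L, τ K L * (v K - v L) = m K / dt * b K) :
    normSq m v ≤ normSq m (fun K => w K + b K) := by
  have h1 : 0 ≤ ∑ K, ∑ L, τ K L * (v K - v L) * v K := by
    have e : ∑ K, ∑ L, τ K L * (v K - v L) * v K
        = ∑ K, ∑ L, τ K L * (v L - v K) * v L := by
      rw [Finset.sum_comm]
      exact Finset.sum_congr rfl fun K _ => Finset.sum_congr rfl fun L _ => by rw [hs L K]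
    have e2 : 0 ≤ ∑ K, ∑ L, τ K L * (v K - v L) * v K
        + ∑ K, ∑ L, τ K L * (v L - v K) * v L := by
      rw [← Finset.sum_add_distrib]
      refine Finset.sum_nonneg fun K _ => ?_
      rw [← Finset.sum_add_distrib]
      refine Finset.sum_nonneg fun L _ => ?_
      have := mul_nonneg (hn K L) (sq_nonneg (v K - v L))
      nlinarith
    linarith
  have h2 : ∀ K, m K * v K ^ 2 + 2 * dt * ∑ L, τ K L * (v K - v L) * v K
      ≤ m K * (w K + b K) ^ 2 := by
    intro K
    have hK := h K
    have e : ∑ L, τ K L * (v K - v L) * v K = (∑ L, τ K L * (v K - v L)) * v K := by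
      rw [Finset.sum_mul]
    rw [e]
    set s := ∑ L, τ K L * (v K - v L)
    have hs' : dt * s = m K * (w K + b K - v K) := by
      field_simp at hK
      linarith
    have : 2 * dt * (s * v K) = 2 * (m K * (w K + b K - v K)) * v K := by
      rw [← hs']; ring
    rw [this]
    nlinarith [mul_nonneg (hm K).le (sq_nonneg (w K + b K - v K))]
  have h3 := Finset.sum_le_sum fun K (_ : K ∈ Finset.univ) => h2 K
  rw [Finset.sum_add_distrib, ← Finset.mul_sum] at h3
  unfold normSq
  have := mul_nonneg (mul_nonneg zero_le_two hdt.le) h1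
  linarith

lemma step_aux {V : Type} [Fintype V] [Nonempty V] {Ω : Type} [MeasurableSpace Ω]
    {T L : ℝ} {g : ℝ → ℝ} {N : ℕ} (S : Scheme V Ω T L g N)
    (C_L : ℝ) (hCL : 0 ≤ C_L)
    (hgrowth : ∀ r : ℝ, |g r| ^ 2 ≤ C_L * (1 + r ^ 2)) (n : ℕ) (hn : n < N)
    (hint : Integrable (fun ω => normSq S.m (S.u n ω)) S.P) :
    Integrable (fun ω => normSq S.m (S.u (n + 1) ω)) S.P ∧
    (∫ ω, normSq S.m (S.u (n + 1) ω) ∂S.P) ≤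
      (1 + C_L * (T / N)) * (∫ ω, normSq S.m (S.u n ω) ∂S.P)
        + C_L * (∑ K, S.m K) * (T / N) := by
  have := S.probP
  have hN : (0 : ℝ) < N := by exact_mod_cast S.N_pos
  have hdt : 0 < T / N := div_pos S.T_pos hN
  have hg : Measurable g := by
    have : LipschitzWith (Real.toNNReal L) g := LipschitzWith.of_dist_le_mul fun x y => by
      rw [Real.dist_eq, Real.dist_eq, Real.coe_toNNReal _ S.L_nonneg]
      exact S.g_lip x y
    exact this.continuous.measurable
  -- deterministic functionals
  let W : Ω → ℝ := S.ΔW (n + 1)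
  let fX : (V → ℝ) → ℝ := fun w => normSq S.m w
  let fY : (V → ℝ) → ℝ := fun w => ∑ K, S.m K * (w K * g (w K))
  let fZ : (V → ℝ) → ℝ := fun w => ∑ K, S.m K * g (w K) ^ 2
  have mX : Measurable fX := by
    unfold fX normSq
    fun_prop
  have mY : Measurable fY := by unfold fY; fun_prop
  have mZ : Measurable fZ := by unfold fZ; fun_prop
  have hu : Measurable (S.u n) := (S.u_meas n hn.le).mono (S.G_le n) le_rfl
  have hu' : Measurable (S.u (n+1)) := (S.u_meas (n+1) hn).mono (S.G_le _) le_rfl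
  have hW : Measurable W := (S.ΔW_meas n hn).mono (S.G_le _) le_rfl
  have hX0 : ∀ w, 0 ≤ fX w := fun w => Finset.sum_nonneg fun K _ =>
    mul_nonneg (S.m_pos K).le (sq_nonneg _)
  have hZ0 : ∀ w, 0 ≤ fZ w := fun w => Finset.sum_nonneg fun K _ =>
    mul_nonneg (S.m_pos K).le (sq_nonneg _)
  have hZle : ∀ w, fZ w ≤ C_L * (∑ K, S.m K) + C_L * fX w := by
    intro w
    unfold fZ fX normSq
    rw [Finset.mul_sum, Finset.mul_sum, ← Finset.sum_add_distrib]
    refine Finset.sum_le_sum fun K _ => ?_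
    have := hgrowth (w K)
    rw [sq_abs] at this
    have := mul_le_mul_of_nonneg_left this (S.m_pos K).le
    linarith
  have hYle : ∀ w, |fY w| ≤ fX w + fZ w := by
    intro w
    unfold fY fZ fX normSq
    rw [← Finset.sum_add_distrib]
    refine (Finset.abs_sum_le_sum_abs _ _).trans (Finset.sum_le_sum fun K _ => ?_)
    rw [abs_mul, abs_of_pos (S.m_pos K), ← mul_add]
    refine mul_le_mul_of_nonneg_left ?_ (S.m_pos K).le
    rw [abs_le]
    constructor <;> nlinarith [sq_nonneg (w K + g (w K)), sq_nonneg (w K - g (w K)), sq_nonneg (w K), sq_nonneg (g (w K))]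
  have iX : Integrable (fun ω => fX (S.u n ω)) S.P := hint
  have iZ : Integrable (fun ω => fZ (S.u n ω)) S.P := by
    refine ((integrable_const (C_L * ∑ K, S.m K)).add (iX.const_mul C_L)).mono'
      (mZ.comp hu).aestronglyMeasurable (ae_of_all _ fun ω => ?_)
    rw [Real.norm_eq_abs, abs_of_nonneg (hZ0 _)]
    exact hZle _
  have iY : Integrable (fun ω => fY (S.u n ω)) S.P :=
    (iX.add iZ).mono' (mY.comp hu).aestronglyMeasurable (ae_of_all _ fun ω => hYle _)
  -- Gaussian moments
  have hlaw : S.P.map W = gaussianReal 0 (Real.toNNReal (T / N)) := S.ΔW_law n hn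
  have hWL : MemLp W 2 S.P := by
    have h := memLp_id_gaussianReal (μ := 0) (v := Real.toNNReal (T / N)) 2
    rw [← hlaw] at h
    exact (memLp_map_measure_iff (by fun_prop) hW.aemeasurable).1 h
  have iW : Integrable W S.P := hWL.integrable (by norm_num)
  have iW2 : Integrable (fun ω => W ω ^ 2) S.P := hWL.integrable_sq
  have eW : ∫ ω, W ω ∂S.P = 0 := by
    have := integral_map (μ := S.P) hW.aemeasurable (f := fun x : ℝ => x) (by fun_prop)
    rw [← this, hlaw, integral_id_gaussianReal]
  have eW2 : ∫ ω, W ω ^ 2 ∂S.P = T / N := by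
    have := integral_map (μ := S.P) hW.aemeasurable (f := fun x : ℝ => x ^ 2) (by fun_prop)
    rw [← this, hlaw]
    have h2 := variance_of_integral_eq_zero (μ := gaussianReal 0 (Real.toNNReal (T / N)))
      (X := fun x : ℝ => x) (by fun_prop) (by rw [integral_id_gaussianReal])
    rw [← h2, variance_fun_id_gaussianReal, Real.coe_toNNReal _ hdt.le]
  -- independence
  have hind : IndepFun W (S.u n) S.P := by
    rw [IndepFun_iff_Indep]
    exact indep_of_indep_of_le_right (S.ΔW_indep n hn) (S.u_meas n hn.le).comap_le
  have indY : IndepFun W (fun ω => fY (S.u n ω)) S.P := hind.comp measurable_id mY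
  have indZ : IndepFun (fun ω => W ω ^ 2) (fun ω => fZ (S.u n ω)) S.P :=
    hind.comp (measurable_id.pow_const 2) mZ
  have iWY : Integrable (fun ω => W ω * fY (S.u n ω)) S.P := indY.integrable_mul iW iY
  have iWZ : Integrable (fun ω => W ω ^ 2 * fZ (S.u n ω)) S.P := indZ.integrable_mul iW2 iZ
  have eWY : ∫ ω, W ω * fY (S.u n ω) ∂S.P = 0 := by
    rw [indY.integral_fun_mul_eq_mul_integral iW.1 iY.1, eW, zero_mul]
  have eWZ : ∫ ω, W ω ^ 2 * fZ (S.u n ω) ∂S.P = T / N * ∫ ω, fZ (S.u n ω) ∂S.P := by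
    rw [indZ.integral_fun_mul_eq_mul_integral iW2.1 iZ.1, eW2]
  -- pointwise bound
  have hbd : ∀ᵐ ω ∂S.P, fX (S.u (n + 1) ω) ≤
      fX (S.u n ω) + 2 * (W ω * fY (S.u n ω)) + W ω ^ 2 * fZ (S.u n ω) := by
    filter_upwards [S.scheme n hn] with ω hω
    have := contraction_aux S.m S.m_pos S.τ S.τ_symm S.τ_nonneg (T / N) hdt
      (S.u (n + 1) ω) (S.u n ω) (fun K => g (S.u n ω K) * W ω)
      (fun K => by rw [hω K]; ring)
    refine this.trans (le_of_eq ?_)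
    unfold fX fY fZ normSq
    simp only [Finset.mul_sum, ← Finset.sum_add_distrib]
    exact Finset.sum_congr rfl fun K _ => by ring
  have iB : Integrable (fun ω => fX (S.u n ω) + 2 * (W ω * fY (S.u n ω))
      + W ω ^ 2 * fZ (S.u n ω)) S.P := (iX.add (iWY.const_mul 2)).add iWZ
  have iX' : Integrable (fun ω => fX (S.u (n + 1) ω)) S.P := by
    refine iB.mono' (mX.comp hu').aestronglyMeasurable ?_
    filter_upwards [hbd] with ω hω
    rwa [Real.norm_eq_abs, abs_of_nonneg (hX0 _)]
  refine ⟨iX', ?_⟩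
  have h1 := integral_mono_ae iX' iB hbd
  have h2 : ∫ ω, (fX (S.u n ω) + 2 * (W ω * fY (S.u n ω)) + W ω ^ 2 * fZ (S.u n ω)) ∂S.P
      = ∫ ω, fX (S.u n ω) ∂S.P + T / N * ∫ ω, fZ (S.u n ω) ∂S.P := by
    have iXY : Integrable (fun ω => fX (S.u n ω) + 2 * (W ω * fY (S.u n ω))) S.P :=
      iX.add (iWY.const_mul 2)
    rw [integral_add iXY iWZ, integral_add iX (iWY.const_mul 2),
      integral_const_mul, eWY, eWZ]
    ring
  have h3 : ∫ ω, fZ (S.u n ω) ∂S.P ≤ C_L * (∑ K, S.m K) + C_L * ∫ ω, fX (S.u n ω) ∂S.P := by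
    have := integral_mono iZ ((integrable_const (C_L * ∑ K, S.m K)).add (iX.const_mul C_L))
      (fun ω => hZle (S.u n ω))
    refine this.trans (le_of_eq ?_)
    simp only [Pi.add_apply]
    rw [integral_add (integrable_const _) (iX.const_mul C_L)]
    simp only [integral_const, probReal_univ, one_smul]
    rw [integral_const_mul]
  have h4 := mul_le_mul_of_nonneg_left h3 hdt.le
  have h5 : ∫ ω, fX (S.u (n + 1) ω) ∂S.P ≤ (1 + C_L * (T / N)) * (∫ ω, fX (S.u n ω) ∂S.P)
        + C_L * (∑ K, S.m K) * (T / N) := by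
    rw [h2] at h1
    linarith
  exact h5

/-- **discrete Gronwall bound.** If `C_L ≥ 0` satisfies
`|g r|² ≤ C_L (1 + r²)` for all `r`, and `A = Σ_K m K`, then for every
`n ∈ {1,…,N}` the scheme solution satisfies
`E[‖uⁿ‖_m²] ≤ ((1 + 2 C_L T) E[‖u⁰‖_m²] + 2 C_L A T) exp(2 C_L T)`. -/
theorem discrete_gronwall_bound
    {V : Type} [Fintype V] [Nonempty V] {Ω : Type} [MeasurableSpace Ω]
    {T L : ℝ} {g : ℝ → ℝ} {N : ℕ} (S : Scheme V Ω T L g N)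
    (C_L : ℝ) (hCL : 0 ≤ C_L)
    (hgrowth : ∀ r : ℝ, |g r| ^ 2 ≤ C_L * (1 + r ^ 2)) :
    ∀ n, 1 ≤ n → n ≤ N →
      (∫ ω, normSq S.m (S.u n ω) ∂S.P) ≤
        ((1 + 2 * C_L * T) * (∫ ω, normSq S.m (S.u 0 ω) ∂S.P)
            + 2 * C_L * (∑ K, S.m K) * T)
          * Real.exp (2 * C_L * T) := by
  have hN : (0 : ℝ) < N := by exact_mod_cast S.N_pos
  have hT := S.T_pos
  have hdt : 0 < T / N := div_pos hT hN
  have hA : 0 ≤ ∑ K, S.m K := Finset.sum_nonneg fun K _ => (S.m_pos K).le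
  have he : 0 ≤ ∫ ω, normSq S.m (S.u 0 ω) ∂S.P := integral_nonneg fun ω =>
    Finset.sum_nonneg fun K _ => mul_nonneg (S.m_pos K).le (sq_nonneg _)
  have key : ∀ n, n ≤ N → Integrable (fun ω => normSq S.m (S.u n ω)) S.P ∧
      (∫ ω, normSq S.m (S.u n ω) ∂S.P) ≤ (1 + C_L * (T / N)) ^ n *
        ((∫ ω, normSq S.m (S.u 0 ω) ∂S.P) + n * (C_L * (∑ K, S.m K) * (T / N))) := by
    intro n
    induction n with
    | zero => intro _; exact ⟨S.u0_int, by simp⟩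
    | succ k ih =>
      intro hk
      obtain ⟨h1, h2⟩ := ih (by omega)
      obtain ⟨h3, h4⟩ := step_aux S C_L hCL hgrowth k (by omega) h1
      refine ⟨h3, h4.trans ?_⟩
      have hq : 1 ≤ 1 + C_L * (T / N) := by nlinarith [mul_nonneg hCL hdt.le]
      have hc : 0 ≤ C_L * (∑ K, S.m K) * (T / N) := by positivity
      have h5 := mul_le_mul_of_nonneg_left h2 (zero_le_one.trans hq)
      have h6 := mul_le_mul_of_nonneg_right (one_le_pow₀ hq (n := k + 1)) hc
      push_cast
      rw [pow_succ] at h6 ⊢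
      linarith
  intro n _ hn
  refine (key n hn).2.trans ?_
  rw [mul_comm]
  have hnN : (n : ℝ) ≤ N := by exact_mod_cast hn
  have hnT : n * (T / N) ≤ T := by
    calc n * (T / N) ≤ N * (T / N) := mul_le_mul_of_nonneg_right hnN hdt.le
      _ = T := by field_simp
  have hpow : (1 + C_L * (T / N)) ^ n ≤ Real.exp (2 * C_L * T) := by
    calc (1 + C_L * (T / N)) ^ n ≤ (Real.exp (C_L * (T / N))) ^ n := by
          refine pow_le_pow_left₀ (by positivity) ?_ n
          have := Real.add_one_le_exp (C_L * (T / N))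
          linarith
      _ = Real.exp (C_L * (n * (T / N))) := by rw [← Real.exp_nat_mul]; congr 1; ring
      _ ≤ _ := by
          apply Real.exp_le_exp.2
          have := mul_le_mul_of_nonneg_left hnT hCL
          nlinarith [mul_nonneg hCL hT.le]
  refine mul_le_mul ?_ hpow (by positivity) (by positivity)
  have h1 := mul_le_mul_of_nonneg_left hnT (mul_nonneg hCL hA)
  have h2 := mul_nonneg (mul_nonneg hCL hA) hT.le
  have h3 := mul_nonneg (mul_nonneg hCL hT.le) he
  linarith
end

section
/- Difference of the left and right time interpolants: for all T > 0, L ≥ 0, g₀ ≥ 0, A > 0 and B ≥ 0 there exists a constant C ≥ 0, depending only on T, L, g₀, A, B, such that for every N ≥ 1, every discrete setting (V, m, τ) with Σ_{K∈V} m K ≤ A, every g Lipschitz with constant L and |g(0)| ≤ g₀, and every initial datum with E[‖u⁰‖_m²] ≤ B, the scheme solution satisfies Δt·Σ_{n=0}^{N−1} E[‖u^{n+1} − u^n‖_m²] ≤ C·Δt; equivalently E[∫₀^T ‖u^r(t) − u^l(t)‖_m² dt] ≤ C·Δt, so that the two interpolants coincide in the limit Δt → 0. -/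
open MeasureTheory ProbabilityTheory

lemma fv_dirichlet {V : Type} [Fintype V] (τ : V → V → ℝ) (hs : ∀ K L, τ K L = τ L K)
    (hn : ∀ K L, 0 ≤ τ K L) (a : V → ℝ) :
    0 ≤ ∑ K, (∑ L, τ K L * (a K - a L)) * a K := by
  have h1 : ∑ K, (∑ L, τ K L * (a K - a L)) * a K = ∑ K, ∑ L, τ K L * (a K - a L) * a K := by
    simp_rw [Finset.sum_mul]
  have h2 : ∑ K, ∑ L, τ K L * (a K - a L) * a K = ∑ K, ∑ L, - (τ K L * (a K - a L) * a L) := by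
    rw [Finset.sum_comm]
    refine Finset.sum_congr rfl fun K _ => Finset.sum_congr rfl fun L _ => ?_
    rw [hs L K]; ring
  have h3 : 0 ≤ ∑ K, ∑ L, τ K L * (a K - a L) ^ 2 :=
    Finset.sum_nonneg fun K _ => Finset.sum_nonneg fun L _ => mul_nonneg (hn K L) (sq_nonneg _)
  have h4 : ∑ K, ∑ L, τ K L * (a K - a L) ^ 2 =
      ∑ K, ∑ L, τ K L * (a K - a L) * a K + ∑ K, ∑ L, - (τ K L * (a K - a L) * a L) := by
    rw [← Finset.sum_add_distrib]
    refine Finset.sum_congr rfl fun K _ => ?_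
    rw [← Finset.sum_add_distrib]
    refine Finset.sum_congr rfl fun L _ => ?_
    ring
  linarith

lemma fv_normSq_nonneg {V : Type} [Fintype V] (m : V → ℝ) (hm : ∀ K, 0 < m K) (w : V → ℝ) :
    0 ≤ normSq m w :=
  Finset.sum_nonneg fun K _ => mul_nonneg (hm K).le (sq_nonneg _)

lemma fv_pointwise {V : Type} [Fintype V] (m : V → ℝ) (hm : ∀ K, 0 < m K)
    (τ : V → V → ℝ) (hs : ∀ K L, τ K L = τ L K)
    (hn : ∀ K L, 0 ≤ τ K L) (g : ℝ → ℝ) (d W : ℝ) (hd : 0 < d) (a b : V → ℝ)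
    (h : ∀ K, m K / d * (a K - b K) + ∑ L, τ K L * (a K - a L) = m K / d * g (b K) * W) :
    normSq m a + (1 / 2) * normSq m (fun K => a K - b K) ≤
      normSq m b + (2 * (W ^ 2 * normSq m (fun K => g (b K)))
        + 2 * (W * ∑ K, m K * (g (b K) * b K))) := by
  have h0 := fv_dirichlet τ hs hn a
  have h1 : ∑ K, (m K * (a K - b K) * a K - m K * g (b K) * W * a K) ≤ 0 := by
    have : ∑ K, (m K * (a K - b K) * a K - m K * g (b K) * W * a K) =
        - (d * ∑ K, (∑ L, τ K L * (a K - a L)) * a K) := by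
      rw [Finset.mul_sum, ← Finset.sum_neg_distrib]
      refine Finset.sum_congr rfl fun K _ => ?_
      have e : ∑ L, τ K L * (a K - a L) = m K / d * g (b K) * W - m K / d * (a K - b K) := by
        linarith [h K]
      rw [e]
      field_simp
      ring
    rw [this]
    have := mul_nonneg hd.le h0
    linarith
  have h2 : normSq m a + (1 / 2) * normSq m (fun K => a K - b K) -
      (normSq m b + (2 * (W ^ 2 * normSq m (fun K => g (b K)))
        + 2 * (W * ∑ K, m K * (g (b K) * b K)))) ≤
      2 * ∑ K, (m K * (a K - b K) * a K - m K * g (b K) * W * a K) := by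
    unfold normSq
    simp only [Finset.mul_sum, ← Finset.sum_add_distrib, ← Finset.sum_sub_distrib]
    refine Finset.sum_le_sum fun K _ => ?_
    have := mul_nonneg (hm K).le (sq_nonneg ((a K - b K) - 2 * (g (b K) * W)))
    nlinarith
  linarith

lemma fv_g_bound {V : Type} [Fintype V] (m : V → ℝ) (hm : ∀ K, 0 < m K) (g : ℝ → ℝ)
    (L g₀ A : ℝ) (hL : 0 ≤ L) (hg : ∀ r s : ℝ, |g r - g s| ≤ L * |r - s|)
    (h0 : |g 0| ≤ g₀) (hA : ∑ K, m K ≤ A) (b : V → ℝ) :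
    normSq m (fun K => g (b K)) ≤ 2 * L ^ 2 * normSq m b + 2 * g₀ ^ 2 * A := by
  have h1 : ∀ r, g r ^ 2 ≤ 2 * L ^ 2 * r ^ 2 + 2 * g₀ ^ 2 := by
    intro r
    have h := hg r 0
    rw [sub_zero] at h
    have h2 : (g r - g 0) ^ 2 ≤ L ^ 2 * r ^ 2 := by
      have := pow_le_pow_left₀ (abs_nonneg _) h 2
      rwa [sq_abs, mul_pow, sq_abs] at this
    have h3 : g 0 ^ 2 ≤ g₀ ^ 2 := by
      have := pow_le_pow_left₀ (abs_nonneg _) h0 2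
      rwa [sq_abs] at this
    nlinarith [sq_nonneg (g r - 2 * g 0)]
  calc normSq m (fun K => g (b K)) ≤ ∑ K, (2 * L ^ 2 * (m K * b K ^ 2) + 2 * g₀ ^ 2 * m K) := by
        unfold normSq
        refine Finset.sum_le_sum fun K _ => ?_
        have := mul_le_mul_of_nonneg_left (h1 (b K)) (hm K).le
        linarith
    _ = 2 * L ^ 2 * normSq m b + 2 * g₀ ^ 2 * ∑ K, m K := by
        rw [Finset.sum_add_distrib, ← Finset.mul_sum, ← Finset.mul_sum]; rfl
    _ ≤ _ := by
        have := mul_le_mul_of_nonneg_left hA (by positivity : 0 ≤ 2 * g₀ ^ 2)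
        linarith

lemma fv_normSq_meas {V : Type} [Fintype V] (m : V → ℝ) : Measurable (normSq m) := by
  unfold normSq
  fun_prop

lemma fv_step {V : Type} [Fintype V] [Nonempty V] {Ω : Type} [mΩ : MeasurableSpace Ω]
    {T L : ℝ} {g : ℝ → ℝ} {N : ℕ} (S : Scheme V Ω T L g N) (g₀ A : ℝ)
    (h0 : |g 0| ≤ g₀) (hA : (∑ K, S.m K) ≤ A) (n : ℕ) (hn : n < N)
    (hint : Integrable (fun ω => normSq S.m (S.u n ω)) S.P) :
    Integrable (fun ω => normSq S.m (S.u (n + 1) ω)) S.P ∧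
    (∫ ω, normSq S.m (S.u (n + 1) ω) ∂S.P) +
      (1 / 2) * (∫ ω, normSq S.m (fun K => S.u (n + 1) ω K - S.u n ω K) ∂S.P) ≤
      (1 + 4 * L ^ 2 * (T / N)) * (∫ ω, normSq S.m (S.u n ω) ∂S.P)
        + 4 * g₀ ^ 2 * A * (T / N) := by
  haveI := S.probP
  have hd : 0 < T / N := div_pos S.T_pos (by exact_mod_cast S.N_pos)
  have hub : Measurable (S.u n) := (S.u_meas n hn.le).mono (S.G_le n) le_rfl
  have hua : Measurable (S.u (n + 1)) := (S.u_meas (n + 1) hn).mono (S.G_le _) le_rfl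
  have hW : Measurable (S.ΔW (n + 1)) := (S.ΔW_meas n hn).mono (S.G_le _) le_rfl
  have hgc : Continuous g := by
    have : LipschitzWith (Real.toNNReal L) g := LipschitzWith.of_dist_le_mul fun x y => by
      rw [Real.dist_eq, Real.dist_eq, Real.coe_toNNReal _ S.L_nonneg]; exact S.g_lip x y
    exact this.continuous
  have hgm : Measurable g := hgc.measurable
  -- functions of the state
  let F : (V → ℝ) → ℝ := fun b => normSq S.m (fun K => g (b K))
  let Q : (V → ℝ) → ℝ := fun b => ∑ K, S.m K * (g (b K) * b K)
  have hF : Measurable F := by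
    change Measurable (fun b : V → ℝ => ∑ K, S.m K * (g (b K)) ^ 2)
    fun_prop
  have hQ : Measurable Q := by
    change Measurable (fun b : V → ℝ => ∑ K, S.m K * (g (b K) * b K))
    fun_prop
  have hFb : ∀ b, F b ≤ 2 * L ^ 2 * normSq S.m b + 2 * g₀ ^ 2 * A := fun b =>
    fv_g_bound S.m S.m_pos g L g₀ A S.L_nonneg S.g_lip h0 hA b
  have hFn : ∀ b, 0 ≤ F b := fun b => fv_normSq_nonneg S.m S.m_pos _
  have hQb : ∀ b, |Q b| ≤ F b + normSq S.m b := by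
    intro b
    refine (Finset.abs_sum_le_sum_abs _ _).trans ?_
    change _ ≤ (∑ K, S.m K * (g (b K)) ^ 2) + ∑ K, S.m K * (b K) ^ 2
    rw [← Finset.sum_add_distrib]
    refine Finset.sum_le_sum fun K _ => ?_
    rw [abs_mul, abs_of_pos (S.m_pos K), ← mul_add]
    refine mul_le_mul_of_nonneg_left ?_ (S.m_pos K).le
    rw [abs_le]
    constructor <;> nlinarith [sq_nonneg (g (b K) + b K), sq_nonneg (g (b K) - b K)]
  have hFint : Integrable (fun ω => F (S.u n ω)) S.P := by
    refine Integrable.mono' ((hint.const_mul (2 * L ^ 2)).add (integrable_const (2 * g₀ ^ 2 * A)))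
      (hF.comp hub).aestronglyMeasurable (ae_of_all _ fun ω => ?_)
    rw [Real.norm_eq_abs, abs_of_nonneg (hFn _)]
    exact hFb _
  have hQint : Integrable (fun ω => Q (S.u n ω)) S.P := by
    refine Integrable.mono' (hFint.add hint)
      (hQ.comp hub).aestronglyMeasurable (ae_of_all _ fun ω => ?_)
    exact hQb _
  -- moments of the increment
  have hlaw := S.ΔW_law n hn
  have hL2 : MemLp (S.ΔW (n + 1)) 2 S.P := by
    have h := memLp_id_gaussianReal (μ := 0) (v := Real.toNNReal (T / N)) 2
    rw [← hlaw] at h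
    exact (memLp_map_measure_iff (by fun_prop) hW.aemeasurable).1 h
  have hWint : Integrable (S.ΔW (n + 1)) S.P := hL2.integrable (by norm_num)
  have hW2int : Integrable (fun ω => S.ΔW (n + 1) ω ^ 2) S.P := hL2.integrable_sq
  have hEW : ∫ ω, S.ΔW (n + 1) ω ∂S.P = 0 := by
    have h := integral_map (μ := S.P) hW.aemeasurable (f := fun x : ℝ => x) (by fun_prop)
    rw [← h, hlaw]
    exact integral_id_gaussianReal
  have hEW2 : ∫ ω, S.ΔW (n + 1) ω ^ 2 ∂S.P = T / N := by
    have h := variance_of_integral_eq_zero hW.aemeasurable hEW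
    have h' : Var[S.ΔW (n + 1); S.P] = T / N := by
      have := variance_map (μ := S.P) (Y := S.ΔW (n + 1)) (X := id) (by fun_prop) hW.aemeasurable
      rw [hlaw, variance_id_gaussianReal, Real.coe_toNNReal _ hd.le] at this
      simpa using this.symm
    rw [← h', h]
  have hindep : IndepFun (S.ΔW (n + 1)) (S.u n) S.P := by
    rw [IndepFun_iff_Indep]
    exact indep_of_indep_of_le_right (S.ΔW_indep n hn) (S.u_meas n hn.le).comap_le
  have hi1 : IndepFun (fun ω => S.ΔW (n + 1) ω ^ 2) (fun ω => F (S.u n ω)) S.P :=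
    hindep.comp (φ := fun x : ℝ => x ^ 2) (ψ := F) (by fun_prop) hF
  have hi2 : IndepFun (S.ΔW (n + 1)) (fun ω => Q (S.u n ω)) S.P :=
    hindep.comp (φ := fun x : ℝ => x) (ψ := Q) measurable_id hQ
  have hP1 : Integrable (fun ω => S.ΔW (n + 1) ω ^ 2 * F (S.u n ω)) S.P :=
    hi1.integrable_mul hW2int hFint
  have hP2 : Integrable (fun ω => S.ΔW (n + 1) ω * Q (S.u n ω)) S.P :=
    hi2.integrable_mul hWint hQint
  have hE1 : ∫ ω, S.ΔW (n + 1) ω ^ 2 * F (S.u n ω) ∂S.P = (T / N) * ∫ ω, F (S.u n ω) ∂S.P := by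
    rw [← hEW2]
    exact hi1.integral_fun_mul_eq_mul_integral hW2int.aestronglyMeasurable
      hFint.aestronglyMeasurable
  have hE2 : ∫ ω, S.ΔW (n + 1) ω * Q (S.u n ω) ∂S.P = 0 := by
    have := hi2.integral_fun_mul_eq_mul_integral hWint.aestronglyMeasurable
      hQint.aestronglyMeasurable
    rw [this, hEW, zero_mul]
  have hpt : ∀ᵐ ω ∂S.P, normSq S.m (S.u (n + 1) ω)
      + (1 / 2) * normSq S.m (fun K => S.u (n + 1) ω K - S.u n ω K) ≤
      normSq S.m (S.u n ω) + (2 * (S.ΔW (n + 1) ω ^ 2 * F (S.u n ω))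
        + 2 * (S.ΔW (n + 1) ω * Q (S.u n ω))) := by
    filter_upwards [S.scheme n hn] with ω hω
    exact fv_pointwise S.m S.m_pos S.τ S.τ_symm S.τ_nonneg g (T / N) _ hd _ _ hω
  have hP12 : Integrable (fun ω => 2 * (S.ΔW (n + 1) ω ^ 2 * F (S.u n ω))
        + 2 * (S.ΔW (n + 1) ω * Q (S.u n ω))) S.P := (hP1.const_mul 2).add (hP2.const_mul 2)
  have hR : Integrable (fun ω => normSq S.m (S.u n ω) + (2 * (S.ΔW (n + 1) ω ^ 2 * F (S.u n ω))
        + 2 * (S.ΔW (n + 1) ω * Q (S.u n ω)))) S.P := hint.add hP12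
  have hA1 : Integrable (fun ω => normSq S.m (S.u (n + 1) ω)) S.P := by
    refine hR.mono' ((fv_normSq_meas S.m).comp hua).aestronglyMeasurable ?_
    filter_upwards [hpt] with ω hω
    rw [Real.norm_eq_abs, abs_of_nonneg (fv_normSq_nonneg S.m S.m_pos _)]
    have := fv_normSq_nonneg S.m S.m_pos (fun K => S.u (n + 1) ω K - S.u n ω K)
    linarith
  have hD1 : Integrable
      (fun ω => (1 / 2) * normSq S.m (fun K => S.u (n + 1) ω K - S.u n ω K)) S.P := by
    refine hR.mono' (((fv_normSq_meas S.m).comp (hua.sub hub)).const_mul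
      (1 / 2)).aestronglyMeasurable ?_
    filter_upwards [hpt] with ω hω
    have h1 := fv_normSq_nonneg S.m S.m_pos (fun K => S.u (n + 1) ω K - S.u n ω K)
    have h2 := fv_normSq_nonneg S.m S.m_pos (S.u (n + 1) ω)
    rw [Real.norm_eq_abs, abs_of_nonneg (by linarith)]
    linarith
  refine ⟨hA1, ?_⟩
  have hmain := integral_mono_ae (hA1.add hD1) hR hpt
  have e1 : ∫ ω, (normSq S.m (S.u (n + 1) ω)
      + (1 / 2) * normSq S.m (fun K => S.u (n + 1) ω K - S.u n ω K)) ∂S.P =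
      (∫ ω, normSq S.m (S.u (n + 1) ω) ∂S.P) +
      (1 / 2) * (∫ ω, normSq S.m (fun K => S.u (n + 1) ω K - S.u n ω K) ∂S.P) := by
    rw [integral_add hA1 hD1, integral_const_mul]
  have e2 : ∫ ω, (normSq S.m (S.u n ω) + (2 * (S.ΔW (n + 1) ω ^ 2 * F (S.u n ω))
        + 2 * (S.ΔW (n + 1) ω * Q (S.u n ω)))) ∂S.P =
      (∫ ω, normSq S.m (S.u n ω) ∂S.P) + 2 * ((T / N) * ∫ ω, F (S.u n ω) ∂S.P) := by
    rw [integral_add hint hP12, integral_add (hP1.const_mul 2) (hP2.const_mul 2),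
      integral_const_mul, integral_const_mul, hE1, hE2]
    ring
  have e3 : ∫ ω, F (S.u n ω) ∂S.P ≤
      2 * L ^ 2 * (∫ ω, normSq S.m (S.u n ω) ∂S.P) + 2 * g₀ ^ 2 * A := by
    have h := integral_mono hFint ((hint.const_mul (2 * L ^ 2)).add
      (integrable_const (2 * g₀ ^ 2 * A))) (fun ω => hFb (S.u n ω))
    refine h.trans (le_of_eq ?_)
    simp only [Pi.add_apply]
    rw [integral_add (hint.const_mul _) (integrable_const _), integral_const_mul]
    simp
  have hmain' := e1.symm.le.trans (hmain.trans e2.le)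
  have := mul_le_mul_of_nonneg_left e3 hd.le
  linarith

lemma fv_gronwall (α β d B : ℝ) (hα : 0 ≤ α) (hβ : 0 ≤ β) (hd : 0 ≤ d) (hB : 0 ≤ B)
    (N : ℕ) (y D : ℕ → ℝ) (hD : ∀ n, 0 ≤ D n) (hy : ∀ n, 0 ≤ y n) (y0 : y 0 ≤ B)
    (h : ∀ n < N, y (n + 1) + (1 / 2) * D n ≤ (1 + α * d) * y n + β * d) :
    ∑ n ∈ Finset.range N, D n ≤
      2 * (B + N * d * (α * (Real.exp (α * (N * d)) * (B + N * d * β)) + β)) := by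
  have hq : 1 ≤ 1 + α * d := by nlinarith [mul_nonneg hα hd]
  have h1 : ∀ n ≤ N, y n ≤ (1 + α * d) ^ n * (B + n * d * β) := by
    intro n
    induction n with
    | zero => intro _; simpa using y0
    | succ k ih =>
      intro hk
      have a1 := ih (by omega)
      have a2 := h k (by omega)
      have a3 := mul_le_mul_of_nonneg_left a1 (by linarith : 0 ≤ 1 + α * d)
      have a4 : 1 ≤ (1 + α * d) ^ (k + 1) := one_le_pow₀ hq
      have a5 := mul_le_mul_of_nonneg_right a4 (mul_nonneg hβ hd)
      have a6 := hD k
      have : (1 + α * d) ^ (k + 1) * (B + ((k + 1 : ℕ) : ℝ) * d * β) =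
        (1 + α * d) * ((1 + α * d) ^ k * (B + k * d * β)) + (1 + α * d) ^ (k + 1) * (β * d) := by
        push_cast; ring
      rw [this]
      linarith
  set M := Real.exp (α * (N * d)) * (B + N * d * β) with hM
  have h2 : ∀ n ≤ N, y n ≤ M := by
    intro n hn
    refine (h1 n hn).trans ?_
    have hc : (n : ℝ) ≤ N := by exact_mod_cast hn
    refine mul_le_mul ?_ ?_ (by positivity) (Real.exp_pos _).le
    · calc (1 + α * d) ^ n ≤ (1 + α * d) ^ N := pow_le_pow_right₀ hq hn
        _ ≤ (Real.exp (α * d)) ^ N :=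
          pow_le_pow_left₀ (by linarith) (by linarith [Real.add_one_le_exp (α * d)]) N
        _ = _ := by rw [← Real.exp_nat_mul]; congr 1; ring
    · gcongr
  have h3 : ∀ n ≤ N, y n + (1 / 2) * ∑ k ∈ Finset.range n, D k ≤ B + n * d * (α * M + β) := by
    intro n
    induction n with
    | zero => intro _; simpa using y0
    | succ k ih =>
      intro hk
      have a1 := ih (by omega)
      have a2 := h k (by omega)
      have a3 := mul_le_mul_of_nonneg_left (h2 k (by omega)) (mul_nonneg hα hd)
      rw [Finset.sum_range_succ]
      push_cast
      linarith
  have := h3 N le_rfl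
  linarith [hy N]

/-- **difference of the left and right time interpolants.** For all
`T > 0`, `L ≥ 0`, `g₀ ≥ 0`, `A > 0`, `B ≥ 0` there is a constant `C ≥ 0`, depending
only on `T, L, g₀, A, B`, such that for every scheme (with `Σ m K ≤ A`, `|g 0| ≤ g₀`,
`E[‖u⁰‖_m²] ≤ B`):
`Δt · Σ_{n<N} E[‖u^{n+1} − u^n‖_m²] ≤ C·Δt`, i.e.
`E[∫₀^T ‖u^r(t) − u^l(t)‖_m² dt] ≤ C·Δt`. -/
theorem interpolant_difference_estimate (T L g₀ A B : ℝ)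
    (hT : 0 < T) (hL : 0 ≤ L) (hg₀ : 0 ≤ g₀) (hA : 0 < A) (hB : 0 ≤ B) :
    ∃ C : ℝ, 0 ≤ C ∧
      ∀ (V : Type) [Fintype V] [Nonempty V]
        (Ω : Type) [MeasurableSpace Ω] (g : ℝ → ℝ) (N : ℕ)
        (S : Scheme V Ω T L g N),
        |g 0| ≤ g₀ → (∑ K, S.m K) ≤ A →
        (∫ ω, normSq S.m (S.u 0 ω) ∂S.P) ≤ B →
        (T / N) * ∑ n ∈ Finset.range N,
            ∫ ω, normSq S.m (fun K => S.u (n + 1) ω K - S.u n ω K) ∂S.P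
          ≤ C * (T / N) := by
  refine ⟨2 * (B + T * (4 * L ^ 2 * (Real.exp (4 * L ^ 2 * T) * (B + T * (4 * g₀ ^ 2 * A)))
    + 4 * g₀ ^ 2 * A)), by positivity, ?_⟩
  intro V _ _ Ω _ g N S h0 hSA hSB
  have hN : (0 : ℝ) < N := by exact_mod_cast S.N_pos
  have hd : 0 < T / N := div_pos hT hN
  have hint : ∀ n ≤ N, Integrable (fun ω => normSq S.m (S.u n ω)) S.P := by
    intro n
    induction n with
    | zero => intro _; exact S.u0_int
    | succ k ih => intro hk; exact (fv_step S g₀ A h0 hSA k (by omega) (ih (by omega))).1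
  have key := fv_gronwall (4 * L ^ 2) (4 * g₀ ^ 2 * A) (T / N) B (by positivity) (by positivity)
    hd.le hB N (fun n => ∫ ω, normSq S.m (S.u n ω) ∂S.P)
    (fun n => ∫ ω, normSq S.m (fun K => S.u (n + 1) ω K - S.u n ω K) ∂S.P)
    (fun n => integral_nonneg fun ω => fv_normSq_nonneg S.m S.m_pos _)
    (fun n => integral_nonneg fun ω => fv_normSq_nonneg S.m S.m_pos _) hSB
    (fun n hn => (fv_step S g₀ A h0 hSA n hn (hint n hn.le)).2)
  have e : (N : ℝ) * (T / N) = T := by field_simp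
  rw [e] at key
  rw [mul_comm]
  exact mul_le_mul_of_nonneg_right key hd.le
end

section
/- Maximal second-moment bound (Lemma 3.4): for all T > 0, L ≥ 0, g₀ ≥ 0, A > 0 and B ≥ 0 there exists a constant C ≥ 0, depending only on T, L, g₀, A, B, such that for every N ≥ 1, every discrete setting (V, m, τ) with Σ_{K∈V} m K ≤ A, every g Lipschitz with constant L and |g(0)| ≤ g₀, and every initial datum with E[‖u⁰‖_m²] ≤ B, the scheme solution satisfies E[max_{n∈{0,…,N}} ‖u^n‖_m²] ≤ C. -/
open MeasureTheory ProbabilityTheory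

set_option linter.unusedSectionVars false

structure NoiseData {Ω : Type} [mΩ : MeasurableSpace Ω] (P : Measure Ω)
    (G : ℕ → MeasurableSpace Ω) (N : ℕ) (Δ κ : ℝ) (ξ : ℕ → Ω → ℝ) : Prop where
  le : ∀ n, G n ≤ mΩ
  mono : Monotone G
  meas : ∀ n, n < N → Measurable[G (n + 1)] (ξ (n + 1))
  indep : ∀ n, n < N →
    Indep (MeasurableSpace.comap (ξ (n + 1)) Real.measurableSpace) (G n) P
  mem : ∀ n, n < N → MemLp (ξ (n + 1)) 4 P
  m1 : ∀ n, n < N → ∫ ω, ξ (n + 1) ω ∂P = 0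
  m2 : ∀ n, n < N → ∫ ω, ξ (n + 1) ω ^ 2 ∂P = Δ
  m4 : ∀ n, n < N → ∫ ω, ξ (n + 1) ω ^ 4 ∂P = κ * Δ ^ 2

section noise
variable {Ω : Type} [mΩ : MeasurableSpace Ω] {P : Measure Ω} [IsProbabilityMeasure P]
    {G : ℕ → MeasurableSpace Ω} {N : ℕ} {Δ κ : ℝ} {ξ : ℕ → Ω → ℝ}

lemma NoiseData.indepMul (H : NoiseData P G N Δ κ ξ) {n : ℕ} (hn : n < N) {F : Ω → ℝ}
    (hF : Measurable[G n] F) (hi : Integrable F P) (j : ℕ)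
    (hj : Integrable (fun ω => ξ (n + 1) ω ^ j) P) :
    Integrable (fun ω => F ω * ξ (n + 1) ω ^ j) P ∧
      ∫ ω, F ω * ξ (n + 1) ω ^ j ∂P = (∫ ω, F ω ∂P) * ∫ ω, ξ (n + 1) ω ^ j ∂P := by
  have hind : IndepFun F (fun ω => ξ (n + 1) ω ^ j) P := by
    have h1 : IndepFun F (ξ (n + 1)) P := by
      rw [IndepFun_iff_Indep]
      exact (indep_of_indep_of_le_right (H.indep n hn) hF.comap_le).symm
    exact h1.comp (φ := id) (ψ := fun x : ℝ => x ^ j) measurable_id (by fun_prop)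
  exact ⟨hind.integrable_mul hi hj,
    hind.integral_fun_mul_eq_mul_integral hi.aestronglyMeasurable hj.aestronglyMeasurable⟩

lemma NoiseData.int4 (H : NoiseData P G N Δ κ ξ) {n : ℕ} (hn : n < N) :
    Integrable (fun ω => ξ (n + 1) ω ^ 4) P := by
  have h := (H.mem n hn).integrable_norm_pow (p := 4) (by norm_num)
  refine h.congr (Filter.Eventually.of_forall fun ω => ?_)
  simp only [Real.norm_eq_abs]
  exact Even.pow_abs (by decide) _

lemma NoiseData.mem2 (H : NoiseData P G N Δ κ ξ) {n : ℕ} (hn : n < N) :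
    MemLp (ξ (n + 1)) 2 P := (H.mem n hn).mono_exponent (by norm_num)

lemma NoiseData.int2 (H : NoiseData P G N Δ κ ξ) {n : ℕ} (hn : n < N) :
    Integrable (fun ω => ξ (n + 1) ω ^ 2) P := (H.mem2 hn).integrable_sq

lemma NoiseData.mul1 (H : NoiseData P G N Δ κ ξ) {n : ℕ} (hn : n < N) {F : Ω → ℝ}
    (hF : Measurable[G n] F) (hi : Integrable F P) :
    Integrable (fun ω => F ω * ξ (n + 1) ω) P ∧ ∫ ω, F ω * ξ (n + 1) ω ∂P = 0 := by
  have := H.indepMul hn hF hi 1 (by simpa using (H.mem2 hn).integrable (by norm_num))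
  simpa [H.m1 n hn] using this

lemma NoiseData.mul2 (H : NoiseData P G N Δ κ ξ) {n : ℕ} (hn : n < N) {F : Ω → ℝ}
    (hF : Measurable[G n] F) (hi : Integrable F P) :
    Integrable (fun ω => F ω * ξ (n + 1) ω ^ 2) P ∧
      ∫ ω, F ω * ξ (n + 1) ω ^ 2 ∂P = (∫ ω, F ω ∂P) * Δ := by
  have := H.indepMul hn hF hi 2 (H.int2 hn)
  simpa [H.m2 n hn] using this

lemma NoiseData.mul4 (H : NoiseData P G N Δ κ ξ) {n : ℕ} (hn : n < N) {F : Ω → ℝ}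
    (hF : Measurable[G n] F) (hi : Integrable F P) :
    Integrable (fun ω => F ω * ξ (n + 1) ω ^ 4) P ∧
      ∫ ω, F ω * ξ (n + 1) ω ^ 4 ∂P = (∫ ω, F ω ∂P) * (κ * Δ ^ 2) := by
  have := H.indepMul hn hF hi 4 (H.int4 hn)
  simpa [H.m4 n hn] using this

lemma NoiseData.memMul (H : NoiseData P G N Δ κ ξ) {n : ℕ} (hn : n < N) {F : Ω → ℝ}
    (hF : Measurable[G n] F) (hi : MemLp F 2 P) :
    MemLp (fun ω => F ω * ξ (n + 1) ω) 2 P := by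
  have hF' : Measurable F := hF.mono (H.le n) le_rfl
  have hx : Measurable (ξ (n + 1)) := (H.meas n hn).mono (H.le _) le_rfl
  refine (memLp_two_iff_integrable_sq (hF'.mul hx).aestronglyMeasurable).2 ?_
  have := (H.mul2 hn (F := fun ω => F ω ^ 2) (hF.pow_const 2) hi.integrable_sq).1
  simpa [mul_pow] using this

/-- discrete stochastic integral -/
def stochSum (α ξ : ℕ → Ω → ℝ) (n : ℕ) (ω : Ω) : ℝ :=
  ∑ k ∈ Finset.range n, α k ω * ξ (k + 1) ω

/-- running maximum -/
def runMax (M : ℕ → Ω → ℝ) : ℕ → Ω → ℝ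
  | 0 => M 0
  | n + 1 => fun ω => max (runMax M n ω) (M (n + 1) ω)

lemma le_runMax (M : ℕ → Ω → ℝ) (n : ℕ) (ω : Ω) : ∀ k ≤ n, M k ω ≤ runMax M n ω := by
  induction n with
  | zero => intro k hk; obtain rfl : k = 0 := by omega
            exact le_rfl
  | succ n ih =>
    intro k hk
    rcases Nat.lt_or_ge n k with h | h
    · obtain rfl : k = n + 1 := by omega
      exact le_max_right _ _
    · exact (ih k h).trans (le_max_left _ _)

lemma stochSum_props (H : NoiseData P G N Δ κ ξ) (α : ℕ → Ω → ℝ)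
    (hα : ∀ n, n < N → Measurable[G n] (α n)) (hα2 : ∀ n, n < N → MemLp (α n) 2 P) :
    ∀ n, n ≤ N → Measurable[G n] (stochSum α ξ n) ∧ MemLp (stochSum α ξ n) 2 P ∧
      ∫ ω, stochSum α ξ n ω ^ 2 ∂P = Δ * ∑ k ∈ Finset.range n, ∫ ω, α k ω ^ 2 ∂P := by
  intro n
  induction n with
  | zero =>
    intro _
    have : stochSum α ξ 0 = fun _ => (0 : ℝ) := by ext; simp [stochSum]
    rw [this]
    exact ⟨measurable_const, MemLp.zero', by simp⟩
  | succ n ih =>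
    intro hn
    have hn' : n < N := hn
    obtain ⟨h1, h2, h3⟩ := ih hn'.le
    have e : stochSum α ξ (n + 1) = fun ω => stochSum α ξ n ω + α n ω * ξ (n + 1) ω := by
      ext; simp [stochSum, Finset.sum_range_succ]
    have hle := H.mono (Nat.le_succ n)
    refine ⟨?_, ?_, ?_⟩
    · rw [e]
      exact (h1.mono hle le_rfl).add (((hα n hn').mono hle le_rfl).mul (H.meas n hn'))
    · rw [e]
      exact h2.add (H.memMul hn' (hα n hn') (hα2 n hn'))
    · have a1 := H.mul1 hn' (F := fun ω => 2 * (stochSum α ξ n ω * α n ω))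
        ((h1.mul (hα n hn')).const_mul 2) ((h2.integrable_mul (hα2 n hn')).const_mul 2)
      have a2 := H.mul2 hn' (F := fun ω => α n ω ^ 2) ((hα n hn').pow_const 2)
        (hα2 n hn').integrable_sq
      have : ∀ ω, stochSum α ξ (n + 1) ω ^ 2 = stochSum α ξ n ω ^ 2 +
          2 * (stochSum α ξ n ω * α n ω) * ξ (n + 1) ω + α n ω ^ 2 * ξ (n + 1) ω ^ 2 := by
        intro ω; rw [e]; ring
      simp_rw [this]
      rw [integral_add (by exact h2.integrable_sq.add a1.1) a2.1, integral_add h2.integrable_sq a1.1,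
        a1.2, a2.2, h3, Finset.sum_range_succ]
      ring

lemma runMax_props (H : NoiseData P G N Δ κ ξ) (α : ℕ → Ω → ℝ)
    (hα : ∀ n, n < N → Measurable[G n] (α n)) (hα2 : ∀ n, n < N → MemLp (α n) 2 P) :
    ∀ n, n ≤ N → Measurable[G n] (runMax (stochSum α ξ) n) ∧
      MemLp (runMax (stochSum α ξ) n) 2 P ∧
      ∫ ω, (1 / 2 * runMax (stochSum α ξ) n ω ^ 2
        - runMax (stochSum α ξ) n ω * stochSum α ξ n ω) ∂P ≤ 0 := by
  intro n
  induction n with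
  | zero =>
    intro _
    have : stochSum α ξ 0 = fun _ => (0 : ℝ) := by ext; simp [stochSum]
    simp only [runMax]
    rw [this]
    exact ⟨measurable_const, MemLp.zero', by simp⟩
  | succ n ih =>
    intro hn
    have hn' : n < N := hn
    obtain ⟨h1, h2, h3⟩ := ih hn'.le
    obtain ⟨s1, s2, -⟩ := stochSum_props H α hα hα2 n hn'.le
    obtain ⟨t1, t2, -⟩ := stochSum_props H α hα hα2 (n + 1) hn
    have e : ∀ ω, stochSum α ξ (n + 1) ω = stochSum α ξ n ω + α n ω * ξ (n + 1) ω := by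
      intro ω; simp [stochSum, Finset.sum_range_succ]
    have hle := H.mono (Nat.le_succ n)
    have m2 : MemLp (runMax (stochSum α ξ) (n + 1)) 2 P := h2.sup t2
    refine ⟨?_, m2, ?_⟩
    · exact (h1.mono hle le_rfl).max t1
    · have a1 := H.mul1 hn' (F := fun ω => runMax (stochSum α ξ) n ω * α n ω)
        (h1.mul (hα n hn')) (h2.integrable_mul (hα2 n hn'))
      have i0 : Integrable (fun ω => 1 / 2 * runMax (stochSum α ξ) n ω ^ 2
        - runMax (stochSum α ξ) n ω * stochSum α ξ n ω) P :=
        (h2.integrable_sq.const_mul _).sub (h2.integrable_mul s2)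
      have i1 : Integrable (fun ω => 1 / 2 * runMax (stochSum α ξ) (n + 1) ω ^ 2
        - runMax (stochSum α ξ) (n + 1) ω * stochSum α ξ (n + 1) ω) P :=
        (m2.integrable_sq.const_mul _).sub (m2.integrable_mul t2)
      calc _ ≤ ∫ ω, ((1 / 2 * runMax (stochSum α ξ) n ω ^ 2
        - runMax (stochSum α ξ) n ω * stochSum α ξ n ω) -
          runMax (stochSum α ξ) n ω * α n ω * ξ (n + 1) ω) ∂P := by
            refine integral_mono i1 (i0.sub a1.1) fun ω => ?_
            have hm : runMax (stochSum α ξ) (n + 1) ω =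
              max (runMax (stochSum α ξ) n ω) (stochSum α ξ (n + 1) ω) := rfl
            have he := e ω
            simp only [hm]
            rcases max_cases (runMax (stochSum α ξ) n ω) (stochSum α ξ (n + 1) ω) with h | h
            · rw [h.1, he]; nlinarith
            · rw [h.1]
              nlinarith [sq_nonneg (runMax (stochSum α ξ) n ω - stochSum α ξ (n + 1) ω)]
        _ ≤ 0 := by
            rw [integral_sub i0 a1.1, a1.2]; linarith

lemma doob_sq (H : NoiseData P G N Δ κ ξ) (α : ℕ → Ω → ℝ)
    (hα : ∀ n, n < N → Measurable[G n] (α n)) (hα2 : ∀ n, n < N → MemLp (α n) 2 P) :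
    ∫ ω, runMax (stochSum α ξ) N ω ^ 2 ∂P
      ≤ 4 * (Δ * ∑ k ∈ Finset.range N, ∫ ω, α k ω ^ 2 ∂P) := by
  obtain ⟨h1, h2, h3⟩ := runMax_props H α hα hα2 N le_rfl
  obtain ⟨s1, s2, s3⟩ := stochSum_props H α hα hα2 N le_rfl
  rw [← s3]
  have i0 : Integrable (fun ω => 1 / 2 * runMax (stochSum α ξ) N ω ^ 2
        - runMax (stochSum α ξ) N ω * stochSum α ξ N ω) P :=
        (h2.integrable_sq.const_mul _).sub (h2.integrable_mul s2)
  have : ∫ ω, runMax (stochSum α ξ) N ω ^ 2 ∂P ≤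
      ∫ ω, (4 * (1 / 2 * runMax (stochSum α ξ) N ω ^ 2
        - runMax (stochSum α ξ) N ω * stochSum α ξ N ω) + 4 * stochSum α ξ N ω ^ 2) ∂P := by
    refine integral_mono h2.integrable_sq
      ((i0.const_mul 4).add (s2.integrable_sq.const_mul 4)) fun ω => ?_
    simp only
    nlinarith [sq_nonneg (runMax (stochSum α ξ) N ω - 2 * stochSum α ξ N ω)]
  rw [integral_add (i0.const_mul 4) (s2.integrable_sq.const_mul 4), integral_const_mul,
    integral_const_mul] at this
  linarith

/-- Second moment bound by a discrete Gronwall argument. -/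
lemma second_moment (H : NoiseData P G N Δ κ ξ) {c T B : ℝ} (hc : 0 ≤ c) (hΔ : 0 ≤ Δ)
    (hΔT : N * Δ = T) (hκ : 0 ≤ κ) (Z a b : ℕ → Ω → ℝ)
    (hZ : ∀ n, n ≤ N → Measurable[G n] (Z n)) (ha : ∀ n, n < N → Measurable[G n] (a n))
    (hb : ∀ n, n < N → Measurable[G n] (b n))
    (hZ0 : ∀ n ω, 0 ≤ Z n ω) (hab : ∀ n ω, |a n ω| ≤ c * (Z n ω + 1))
    (hb0 : ∀ n ω, 0 ≤ b n ω) (hbb : ∀ n ω, b n ω ≤ c * (Z n ω + 1))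
    (hstep : ∀ n, n < N → ∀ᵐ ω ∂P,
      Z (n + 1) ω ≤ Z n ω + a n ω * ξ (n + 1) ω + b n ω * ξ (n + 1) ω ^ 2)
    (hZi : MemLp (Z 0) 2 P) (hZB : ∫ ω, Z 0 ω ^ 2 ∂P ≤ B) :
    ∀ n, n ≤ N → MemLp (Z n) 2 P ∧
      ∫ ω, Z n ω ^ 2 ∂P + 1 ≤ Real.exp ((4 * c ^ 2 + 4 * c + 4 * κ * c ^ 2 * T) * T) * (B + 1) := by
  set K := 4 * c ^ 2 + 4 * c + 4 * κ * c ^ 2 * T with hK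
  have hT : 0 ≤ T := by rw [← hΔT]; positivity
  have hK0 : 0 ≤ K := by positivity
  have hB0 : 0 ≤ B := le_trans (integral_nonneg fun ω => sq_nonneg _) hZB
  have key : ∀ n, n ≤ N → MemLp (Z n) 2 P ∧
      ∫ ω, Z n ω ^ 2 ∂P + 1 ≤ (1 + K * Δ) ^ n * (B + 1) := by
    intro n
    induction n with
    | zero => intro _; exact ⟨hZi, by simpa using hZB⟩
    | succ n ih =>
      intro hn
      have hn' : n < N := hn
      obtain ⟨z2, hz⟩ := ih hn'.le
      have mZ := hZ n hn'.le
      have mA := ha n hn'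
      have mB := hb n hn'
      have hle := H.le n
      have zc : MemLp (fun ω => c * (Z n ω + 1)) 2 P := (z2.add (memLp_const 1)).const_mul c
      have a2 : MemLp (a n) 2 P := zc.mono' (mA.mono hle le_rfl).aestronglyMeasurable
        (Filter.Eventually.of_forall fun ω => hab n ω)
      have b2 : MemLp (b n) 2 P := zc.mono' (mB.mono hle le_rfl).aestronglyMeasurable
        (Filter.Eventually.of_forall fun ω => by
          rw [Real.norm_eq_abs, abs_of_nonneg (hb0 n ω)]; exact hbb n ω)
      have e1 := H.mul1 hn' (F := fun ω => 2 * (Z n ω * a n ω)) ((mZ.mul mA).const_mul 2)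
        ((z2.integrable_mul a2).const_mul 2)
      have e2 := H.mul2 hn' (F := fun ω => 2 * a n ω ^ 2 + 2 * (Z n ω * b n ω))
        (((mA.pow_const 2).const_mul 2).add ((mZ.mul mB).const_mul 2))
        ((a2.integrable_sq.const_mul 2).add ((z2.integrable_mul b2).const_mul 2))
      have e4 := H.mul4 hn' (F := fun ω => 2 * b n ω ^ 2) ((mB.pow_const 2).const_mul 2)
        (b2.integrable_sq.const_mul 2)
      have izb : Integrable (fun ω => Z n ω ^ 2 + 1) P := z2.integrable_sq.add (integrable_const 1)
      have f2 : ∫ ω, (2 * a n ω ^ 2 + 2 * (Z n ω * b n ω)) ∂P ≤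
          (4 * c ^ 2 + 4 * c) * (∫ ω, Z n ω ^ 2 ∂P + 1) := by
        have : ∫ ω, (2 * a n ω ^ 2 + 2 * (Z n ω * b n ω)) ∂P ≤
            ∫ ω, (4 * c ^ 2 + 4 * c) * (Z n ω ^ 2 + 1) ∂P := by
          refine integral_mono ((a2.integrable_sq.const_mul 2).add
            ((z2.integrable_mul b2).const_mul 2)) (izb.const_mul _) fun ω => ?_
          simp only
          have x1 : a n ω ^ 2 ≤ (c * (Z n ω + 1)) ^ 2 := by
            rw [← sq_abs]; exact pow_le_pow_left₀ (abs_nonneg _) (hab n ω) 2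
          have x2 : Z n ω * b n ω ≤ Z n ω * (c * (Z n ω + 1)) :=
            mul_le_mul_of_nonneg_left (hbb n ω) (hZ0 n ω)
          have x3 : (Z n ω + 1) ^ 2 ≤ 2 * (Z n ω ^ 2 + 1) := by nlinarith [sq_nonneg (Z n ω - 1)]
          have x4 : Z n ω * (Z n ω + 1) ≤ 2 * (Z n ω ^ 2 + 1) := by nlinarith [hZ0 n ω]
          have x5 := mul_le_mul_of_nonneg_left x3 (sq_nonneg c)
          have x6 := mul_le_mul_of_nonneg_left x4 hc
          nlinarith
        rw [integral_const_mul, integral_add z2.integrable_sq (integrable_const 1)] at this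
        simpa using this
      have f4 : ∫ ω, 2 * b n ω ^ 2 ∂P ≤ (4 * c ^ 2) * (∫ ω, Z n ω ^ 2 ∂P + 1) := by
        have : ∫ ω, 2 * b n ω ^ 2 ∂P ≤ ∫ ω, (4 * c ^ 2) * (Z n ω ^ 2 + 1) ∂P := by
          refine integral_mono (b2.integrable_sq.const_mul 2) (izb.const_mul _) fun ω => ?_
          simp only
          have x1 : b n ω ^ 2 ≤ (c * (Z n ω + 1)) ^ 2 := pow_le_pow_left₀ (hb0 n ω) (hbb n ω) 2
          have x3 : (Z n ω + 1) ^ 2 ≤ 2 * (Z n ω ^ 2 + 1) := by nlinarith [sq_nonneg (Z n ω - 1)]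
          have x5 := mul_le_mul_of_nonneg_left x3 (sq_nonneg c)
          nlinarith
        rw [integral_const_mul (4 * c ^ 2), integral_add z2.integrable_sq
          (integrable_const 1)] at this
        simpa using this
      have ibd := ((z2.integrable_sq.add e1.1).add e2.1).add e4.1
      have bd : ∀ᵐ ω ∂P, Z (n + 1) ω ^ 2 ≤ Z n ω ^ 2 + 2 * (Z n ω * a n ω) * ξ (n + 1) ω
          + (2 * a n ω ^ 2 + 2 * (Z n ω * b n ω)) * ξ (n + 1) ω ^ 2
          + 2 * b n ω ^ 2 * ξ (n + 1) ω ^ 4 := by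
        filter_upwards [hstep n hn'] with ω hω
        have := pow_le_pow_left₀ (hZ0 (n + 1) ω) hω 2
        nlinarith [sq_nonneg (a n ω * ξ (n + 1) ω - b n ω * ξ (n + 1) ω ^ 2)]
      have mZ' : AEStronglyMeasurable (Z (n + 1)) P :=
        ((hZ (n + 1) hn).mono (H.le _) le_rfl).aestronglyMeasurable
      have iz : Integrable (fun ω => Z (n + 1) ω ^ 2) P := by
        refine Integrable.mono' ibd (mZ'.pow 2) ?_
        filter_upwards [bd] with ω hω
        rw [Real.norm_eq_abs, abs_of_nonneg (sq_nonneg _)]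
        exact hω
      refine ⟨(memLp_two_iff_integrable_sq mZ').2 iz, ?_⟩
      have := integral_mono_ae iz ibd bd
      rw [integral_add' ((z2.integrable_sq.add e1.1).add e2.1) e4.1,
        integral_add' (z2.integrable_sq.add e1.1) e2.1, integral_add' z2.integrable_sq e1.1,
        e1.2, e2.2, e4.2] at this
      set I := ∫ ω, Z n ω ^ 2 ∂P with hI
      have hI0 : 0 ≤ I := integral_nonneg fun ω => sq_nonneg _
      have hΔle : Δ ≤ T := by
        have : (1 : ℝ) ≤ N := by exact_mod_cast (by omega : 1 ≤ N)
        nlinarith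
      have y2 := mul_le_mul_of_nonneg_right f2 hΔ
      have y4 := mul_le_mul_of_nonneg_right f4 (by positivity : 0 ≤ κ * Δ ^ 2)
      have y5 : 4 * c ^ 2 * (I + 1) * (κ * Δ ^ 2) ≤ 4 * c ^ 2 * (I + 1) * (κ * (Δ * T)) := by
        have hsq : Δ ^ 2 ≤ Δ * T := by nlinarith
        gcongr
      have : ∫ ω, Z (n + 1) ω ^ 2 ∂P + 1 ≤ (1 + K * Δ) * (I + 1) := by
        rw [hK]; nlinarith
      refine this.trans ?_
      rw [pow_succ']
      rw [mul_assoc]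
      exact mul_le_mul_of_nonneg_left hz (by positivity)
  intro n hn
  refine ⟨(key n hn).1, (key n hn).2.trans ?_⟩
  refine mul_le_mul_of_nonneg_right ?_ (by linarith)
  have h1 : 1 + K * Δ ≤ Real.exp (K * Δ) := by linarith [Real.add_one_le_exp (K * Δ)]
  have hKD : 0 ≤ K * Δ := by positivity
  calc (1 + K * Δ) ^ n ≤ Real.exp (K * Δ) ^ n := pow_le_pow_left₀ (by positivity) h1 n
    _ = Real.exp (n * (K * Δ)) := by rw [← Real.exp_nat_mul]
    _ ≤ Real.exp (K * T) := by
      apply Real.exp_le_exp.2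
      rw [← hΔT]
      have : (n : ℝ) ≤ N := by exact_mod_cast hn
      nlinarith

lemma abstract_max (H : NoiseData P G N Δ κ ξ) {c T B D : ℝ} (hc : 0 ≤ c) (hΔ : 0 ≤ Δ)
    (hΔT : N * Δ = T) (hκ : 0 ≤ κ)
    (hD : D = Real.exp ((4 * c ^ 2 + 4 * c + 4 * κ * c ^ 2 * T) * T) * (B + 1))
    (X a b : ℕ → Ω → ℝ)
    (hX : ∀ n, n ≤ N → Measurable[G n] (X n)) (ha : ∀ n, n < N → Measurable[G n] (a n))
    (hb : ∀ n, n < N → Measurable[G n] (b n))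
    (hX0 : ∀ n ω, 0 ≤ X n ω) (hab : ∀ n ω, |a n ω| ≤ c * (X n ω + 1))
    (hb0 : ∀ n ω, 0 ≤ b n ω) (hbb : ∀ n ω, b n ω ≤ c * (X n ω + 1))
    (hstep : ∀ n, n < N → ∀ᵐ ω ∂P,
      X (n + 1) ω ≤ X n ω + a n ω * ξ (n + 1) ω + b n ω * ξ (n + 1) ω ^ 2)
    (hXi : Integrable (X 0) P) (hXB : ∫ ω, X 0 ω ∂P ≤ B) :
    ∃ R : Ω → ℝ, Integrable R P ∧ (∀ᵐ ω ∂P, ∀ n ≤ N, X n ω ≤ R ω) ∧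
      ∫ ω, R ω ∂P ≤ B + 1 / 2 * (1 + B) + 4 * c ^ 2 * T * D
        + T * (c * (1 / 2 * (1 + B) + 1 / 2 * D + 1)) := by
  have hT : 0 ≤ T := by rw [← hΔT]; positivity
  set s : Ω → ℝ := fun ω => Real.sqrt (1 + X 0 ω) with hs
  have hs2 : ∀ ω, s ω ^ 2 = 1 + X 0 ω := fun ω => Real.sq_sqrt (by linarith [hX0 0 ω])
  have hs1 : ∀ ω, 1 ≤ s ω := fun ω => by
    rw [hs]; exact Real.one_le_sqrt.2 (by linarith [hX0 0 ω])
  have hsp : ∀ ω, 0 < s ω := fun ω => lt_of_lt_of_le one_pos (hs1 ω)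
  have ms0 : Measurable[G 0] s := ((hX 0 (Nat.zero_le _)).const_add 1).sqrt
  have ms : ∀ n, Measurable[G n] s := fun n => ms0.mono (H.mono (Nat.zero_le n)) le_rfl
  set Z : ℕ → Ω → ℝ := fun n ω => X n ω / s ω with hZdef
  set α : ℕ → Ω → ℝ := fun n ω => a n ω / s ω with hαdef
  set β : ℕ → Ω → ℝ := fun n ω => b n ω / s ω with hβdef
  have mZ : ∀ n, n ≤ N → Measurable[G n] (Z n) := fun n hn => (hX n hn).div (ms n)
  have mα : ∀ n, n < N → Measurable[G n] (α n) := fun n hn => (ha n hn).div (ms n)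
  have mβ : ∀ n, n < N → Measurable[G n] (β n) := fun n hn => (hb n hn).div (ms n)
  have hZ0 : ∀ n ω, 0 ≤ Z n ω := fun n ω => div_nonneg (hX0 n ω) (hsp ω).le
  have hdiv : ∀ n ω, c * (X n ω + 1) / s ω ≤ c * (Z n ω + 1) := by
    intro n ω
    rw [mul_div_assoc, add_div]
    have : 1 / s ω ≤ 1 := by rw [div_le_one (hsp ω)]; exact hs1 ω
    exact mul_le_mul_of_nonneg_left (by simp only [hZdef]; linarith) hc
  have hαb : ∀ n ω, |α n ω| ≤ c * (Z n ω + 1) := by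
    intro n ω
    refine le_trans ?_ (hdiv n ω)
    simp only [hαdef]
    rw [abs_div, abs_of_pos (hsp ω)]
    exact div_le_div_of_nonneg_right (hab n ω) (hsp ω).le
  have hβb : ∀ n ω, β n ω ≤ c * (Z n ω + 1) := fun n ω =>
    le_trans (div_le_div_of_nonneg_right (hbb n ω) (hsp ω).le) (hdiv n ω)
  have hβ0 : ∀ n ω, 0 ≤ β n ω := fun n ω => div_nonneg (hb0 n ω) (hsp ω).le
  have hZstep : ∀ n, n < N → ∀ᵐ ω ∂P,
      Z (n + 1) ω ≤ Z n ω + α n ω * ξ (n + 1) ω + β n ω * ξ (n + 1) ω ^ 2 := by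
    intro n hn
    filter_upwards [hstep n hn] with ω hω
    have := div_le_div_of_nonneg_right hω (hsp ω).le
    simp only [hZdef, hαdef, hβdef]
    refine this.trans (le_of_eq ?_)
    ring
  have hZX : ∀ ω, Z 0 ω ^ 2 ≤ X 0 ω := by
    intro ω
    simp only [hZdef]
    rw [div_pow, hs2, div_le_iff₀ (by linarith [hX0 0 ω])]
    nlinarith [hX0 0 ω]
  have mZ0 : AEStronglyMeasurable (Z 0) P :=
    ((mZ 0 (Nat.zero_le _)).mono (H.le 0) le_rfl).aestronglyMeasurable
  have iZ0 : Integrable (fun ω => Z 0 ω ^ 2) P := by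
    refine hXi.mono' (mZ0.pow 2) (Filter.Eventually.of_forall fun ω => ?_)
    rw [Real.norm_eq_abs, abs_of_nonneg (sq_nonneg _)]
    exact hZX ω
  have hZm := second_moment H hc hΔ hΔT hκ Z α β mZ mα mβ hZ0 hαb hβ0 hβb hZstep
    ((memLp_two_iff_integrable_sq mZ0).2 iZ0) ((integral_mono iZ0 hXi hZX).trans hXB)
  rw [← hD] at hZm
  have hα2 : ∀ n, n < N → MemLp (α n) 2 P := fun n hn =>
    (((hZm n hn.le).1.add (memLp_const 1)).const_mul c).mono'
      ((mα n hn).mono (H.le n) le_rfl).aestronglyMeasurable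
      (Filter.Eventually.of_forall fun ω => hαb n ω)
  have hαI : ∀ n, n < N → ∫ ω, α n ω ^ 2 ∂P ≤ 2 * c ^ 2 * D := by
    intro n hn
    have hz := (hZm n hn.le).1.integrable_sq
    have : ∫ ω, α n ω ^ 2 ∂P ≤ ∫ ω, 2 * c ^ 2 * (Z n ω ^ 2 + 1) ∂P := by
      refine integral_mono (hα2 n hn).integrable_sq
        ((hz.add (integrable_const 1)).const_mul _) fun ω => ?_
      simp only
      have x1 : α n ω ^ 2 ≤ (c * (Z n ω + 1)) ^ 2 := by
        rw [← sq_abs]; exact pow_le_pow_left₀ (abs_nonneg _) (hαb n ω) 2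
      have x3 : (Z n ω + 1) ^ 2 ≤ 2 * (Z n ω ^ 2 + 1) := by nlinarith [sq_nonneg (Z n ω - 1)]
      have x5 := mul_le_mul_of_nonneg_left x3 (sq_nonneg c)
      nlinarith
    rw [integral_const_mul, integral_add hz (integrable_const 1)] at this
    simp only [integral_const, probReal_univ, smul_eq_mul, mul_one] at this
    exact this.trans (mul_le_mul_of_nonneg_left (hZm n hn.le).2 (by positivity))
  have hXs : ∀ n ω, X n ω = s ω * Z n ω := fun n ω => by
    simp only [hZdef]; field_simp [(hsp ω).ne']
  have hbp : ∀ n ω, b n ω ≤ c * (1 / 2 * (1 + X 0 ω) + 1 / 2 * Z n ω ^ 2 + 1) := by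
    intro n ω
    refine (hbb n ω).trans (mul_le_mul_of_nonneg_left ?_ hc)
    rw [hXs n ω, ← hs2]
    nlinarith [sq_nonneg (s ω - Z n ω)]
  have ibound : ∀ n, n < N → Integrable
      (fun ω => c * (1 / 2 * (1 + X 0 ω) + 1 / 2 * Z n ω ^ 2 + 1)) P := fun n hn =>
    ((((((integrable_const 1).add hXi).const_mul (1 / 2))).add
      ((hZm n hn.le).1.integrable_sq.const_mul (1 / 2))).add (integrable_const 1)).const_mul c
  have ib : ∀ n, n < N → Integrable (b n) P := fun n hn =>
    (ibound n hn).mono' ((hb n hn).mono (H.le n) le_rfl).aestronglyMeasurable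
      (Filter.Eventually.of_forall fun ω => by
        rw [Real.norm_eq_abs, abs_of_nonneg (hb0 n ω)]; exact hbp n ω)
  have hbI : ∀ n, n < N → ∫ ω, b n ω ∂P ≤ c * (1 / 2 * (1 + B) + 1 / 2 * D + 1) := by
    intro n hn
    have hz := (hZm n hn.le).1.integrable_sq
    refine (integral_mono (ib n hn) (ibound n hn) (hbp n)).trans ?_
    rw [integral_const_mul]
    refine mul_le_mul_of_nonneg_left ?_ hc
    have i1 : Integrable (fun ω => 1 / 2 * (1 + X 0 ω)) P :=
      ((integrable_const 1).add hXi).const_mul _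
    rw [integral_add (by exact i1.add (hz.const_mul _)) (integrable_const 1),
      integral_add i1 (hz.const_mul _), integral_const_mul, integral_const_mul,
      integral_add (integrable_const 1) hXi]
    simp only [integral_const, probReal_univ, smul_eq_mul, mul_one]
    linarith [(hZm n hn.le).2]
  obtain ⟨-, r2, -⟩ := runMax_props H α mα hα2 N le_rfl
  have hdoob := doob_sq H α mα hα2
  have ibx : ∀ k ∈ Finset.range N, Integrable (fun ω => b k ω * ξ (k + 1) ω ^ 2) P :=
    fun k hk => (H.mul2 (Finset.mem_range.1 hk) (hb k (Finset.mem_range.1 hk))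
      (ib k (Finset.mem_range.1 hk))).1
  have iS := integrable_finsetSum (Finset.range N) ibx
  have iH : Integrable (fun ω => 1 / 2 * (1 + X 0 ω)) P :=
      ((integrable_const 1).add hXi).const_mul _
  refine ⟨fun ω => X 0 ω + 1 / 2 * (1 + X 0 ω) + 1 / 2 * runMax (stochSum α ξ) N ω ^ 2
    + ∑ k ∈ Finset.range N, b k ω * ξ (k + 1) ω ^ 2,
    ((hXi.add iH).add (r2.integrable_sq.const_mul _)).add iS, ?_, ?_⟩
  · have hall : ∀ᵐ ω ∂P, ∀ n, n < N →
        X (n + 1) ω ≤ X n ω + a n ω * ξ (n + 1) ω + b n ω * ξ (n + 1) ω ^ 2 := by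
      rw [ae_all_iff]
      intro n
      by_cases hn : n < N
      · filter_upwards [hstep n hn] with ω hω _ using hω
      · exact Filter.Eventually.of_forall fun ω h => absurd h hn
    filter_upwards [hall] with ω hω
    have hsum : ∀ n, n ≤ N → X n ω ≤ X 0 ω + s ω * stochSum α ξ n ω
        + ∑ k ∈ Finset.range n, b k ω * ξ (k + 1) ω ^ 2 := by
      intro n
      induction n with
      | zero => intro _; simp [stochSum]
      | succ n ih =>
        intro hn
        have h1 := ih (by omega)
        have h2 := hω n hn
        have h3 : s ω * (α n ω * ξ (n + 1) ω) = a n ω * ξ (n + 1) ω := by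
          simp only [hαdef]; field_simp [(hsp ω).ne']
        simp only [stochSum, Finset.sum_range_succ, mul_add] at h1 ⊢
        rw [h3]
        linarith
    intro n hn
    have h1 := hsum n hn
    have h2 := mul_le_mul_of_nonneg_left (le_runMax (stochSum α ξ) N ω n hn) (hsp ω).le
    have h3 : ∑ k ∈ Finset.range n, b k ω * ξ (k + 1) ω ^ 2 ≤
        ∑ k ∈ Finset.range N, b k ω * ξ (k + 1) ω ^ 2 :=
      Finset.sum_le_sum_of_subset_of_nonneg (Finset.range_mono hn)
        fun k _ _ => mul_nonneg (hb0 k ω) (sq_nonneg _)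
    have h4 := hs2 ω
    nlinarith [sq_nonneg (s ω - runMax (stochSum α ξ) N ω)]
  · rw [integral_add (by exact (hXi.add iH).add (r2.integrable_sq.const_mul _)) iS,
      integral_add (by exact hXi.add iH) (r2.integrable_sq.const_mul _), integral_add hXi iH,
      integral_const_mul, integral_const_mul, integral_add (integrable_const 1) hXi,
      integral_finsetSum _ ibx]
    simp only [integral_const, probReal_univ, smul_eq_mul, mul_one]
    have q1 : ∑ k ∈ Finset.range N, ∫ ω, α k ω ^ 2 ∂P ≤ N * (2 * c ^ 2 * D) := by
      have := Finset.sum_le_card_nsmul (Finset.range N) (fun k => ∫ ω, α k ω ^ 2 ∂P)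
        (2 * c ^ 2 * D) fun k hk => hαI k (Finset.mem_range.1 hk)
      simpa using this
    have q2 : ∑ k ∈ Finset.range N, ∫ ω, b k ω * ξ (k + 1) ω ^ 2 ∂P ≤
        N * (c * (1 / 2 * (1 + B) + 1 / 2 * D + 1) * Δ) := by
      have := Finset.sum_le_card_nsmul (Finset.range N)
        (fun k => ∫ ω, b k ω * ξ (k + 1) ω ^ 2 ∂P)
        (c * (1 / 2 * (1 + B) + 1 / 2 * D + 1) * Δ) fun k hk => by
          have hk := Finset.mem_range.1 hk
          rw [(H.mul2 hk (hb k hk) (ib k hk)).2]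
          exact mul_le_mul_of_nonneg_right (hbI k hk) hΔ
      simpa using this
    have q3 := mul_le_mul_of_nonneg_left q1 hΔ
    have q4 : Δ * (N * (2 * c ^ 2 * D)) = 2 * c ^ 2 * T * D := by rw [← hΔT]; ring
    have q5 : N * (c * (1 / 2 * (1 + B) + 1 / 2 * D + 1) * Δ) =
        T * (c * (1 / 2 * (1 + B) + 1 / 2 * D + 1)) := by rw [← hΔT]; ring
    linarith

end noise

/-- The fourth moment of the standard Gaussian. -/
noncomputable def kappaFour : ℝ := ∫ x, x ^ 4 ∂(gaussianReal 0 1)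

lemma gaussian_four (d : ℝ) (hd : 0 ≤ d) :
    ∫ x, x ^ 4 ∂(gaussianReal 0 (Real.toNNReal d)) = kappaFour * d ^ 2 := by
  have h := gaussianReal_map_const_mul (μ := 0) (v := 1) (Real.sqrt d)
  have e : (NNReal.mk (Real.sqrt d ^ 2) (sq_nonneg _) * 1 : NNReal) = Real.toNNReal d := by
    ext
    simp [Real.sq_sqrt hd, Real.coe_toNNReal d hd]
  rw [e, mul_zero] at h
  rw [← h, integral_map (by fun_prop) (by fun_prop)]
  simp_rw [mul_pow]
  rw [integral_const_mul, kappaFour]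
  have : Real.sqrt d ^ 4 = d ^ 2 := by
    rw [show (4 : ℕ) = 2 * 2 from rfl, pow_mul, Real.sq_sqrt hd]
  rw [this]; ring

section schemeLemmas
variable {V : Type} [Fintype V] [Nonempty V] {Ω : Type} [MeasurableSpace Ω]
  {T L : ℝ} {g : ℝ → ℝ} {N : ℕ}

lemma Scheme.noise (S : Scheme V Ω T L g N) :
    NoiseData S.P S.G N (T / N) kappaFour S.ΔW := by
  have hd : 0 ≤ T / N := div_nonneg S.T_pos.le (Nat.cast_nonneg _)
  have hm : ∀ n, n < N → AEMeasurable (S.ΔW (n + 1)) S.P := fun n hn =>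
    ((S.ΔW_meas n hn).mono (S.G_le _) le_rfl).aemeasurable
  have m1 : ∀ n, n < N → ∫ ω, S.ΔW (n + 1) ω ∂S.P = 0 := by
    intro n hn
    have := integral_map (hm n hn) (f := fun x : ℝ => x) (by fun_prop)
    rw [← this, S.ΔW_law n hn, integral_id_gaussianReal]
  refine ⟨S.G_le, S.G_mono, S.ΔW_meas, S.ΔW_indep, ?_, m1, ?_, ?_⟩
  · intro n hn
    have h := memLp_id_gaussianReal' (μ := 0) (v := Real.toNNReal (T / N)) 4 (by norm_num)
    rw [← S.ΔW_law n hn] at h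
    exact h.comp_of_map (hm n hn)
  · intro n hn
    have := integral_map (hm n hn) (f := fun x : ℝ => x ^ 2) (by fun_prop)
    rw [← this, S.ΔW_law n hn, ← variance_of_integral_eq_zero (X := fun x : ℝ => x)
      (by fun_prop) integral_id_gaussianReal, variance_fun_id_gaussianReal,
      Real.coe_toNNReal _ hd]
  · intro n hn
    have := integral_map (hm n hn) (f := fun x : ℝ => x ^ 4) (by fun_prop)
    rw [← this, S.ΔW_law n hn, gaussian_four _ hd]

lemma dirichlet_nonneg (τ : V → V → ℝ) (hs : ∀ K L', τ K L' = τ L' K)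
    (h0 : ∀ K L', 0 ≤ τ K L') (v : V → ℝ) :
    0 ≤ ∑ K, (∑ L', τ K L' * (v K - v L')) * v K := by
  simp_rw [Finset.sum_mul]
  have h1 : ∑ K, ∑ L', τ K L' * (v K - v L') * v K
      = ∑ K, ∑ L', τ K L' * (v L' - v K) * v L' := by
    rw [Finset.sum_comm]
    refine Finset.sum_congr rfl fun K _ => Finset.sum_congr rfl fun L' _ => ?_
    rw [hs L' K]
  have h2 : ∑ K, ∑ L', τ K L' * (v K - v L') * v K
      + ∑ K, ∑ L', τ K L' * (v L' - v K) * v L'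
      = ∑ K, ∑ L', τ K L' * (v K - v L') ^ 2 := by
    simp_rw [← Finset.sum_add_distrib]
    refine Finset.sum_congr rfl fun K _ => Finset.sum_congr rfl fun L' _ => ?_
    ring
  have h3 : 0 ≤ ∑ K, ∑ L', τ K L' * (v K - v L') ^ 2 :=
    Finset.sum_nonneg fun K _ => Finset.sum_nonneg fun L' _ =>
      mul_nonneg (h0 K L') (sq_nonneg _)
  linarith

lemma energy_step (m : V → ℝ) (hm : ∀ K, 0 < m K) (τ : V → V → ℝ)
    (hs : ∀ K L', τ K L' = τ L' K) (h0 : ∀ K L', 0 ≤ τ K L') (d : ℝ) (hd : 0 < d)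
    (u v γ : V → ℝ) (x : ℝ)
    (h : ∀ K, m K / d * (v K - u K) + ∑ L', τ K L' * (v K - v L') = m K / d * γ K * x) :
    normSq m v ≤ normSq m u + (∑ K, 2 * (m K * (γ K * u K))) * x
      + (∑ K, m K * γ K ^ 2) * x ^ 2 := by
  have hdir := dirichlet_nonneg τ hs h0 v
  have hK : ∀ K, m K * v K ^ 2 + 2 * d * ((∑ L', τ K L' * (v K - v L')) * v K) ≤
      m K * u K ^ 2 + 2 * (m K * (γ K * u K)) * x + m K * γ K ^ 2 * x ^ 2 := by
    intro K
    have e : d * ∑ L', τ K L' * (v K - v L') = m K * (γ K * x) - m K * (v K - u K) := by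
      have := h K
      field_simp at this
      linarith
    have e2 : 2 * d * ((∑ L', τ K L' * (v K - v L')) * v K) =
        2 * (m K * (γ K * x) - m K * (v K - u K)) * v K := by rw [← e]; ring
    rw [e2]
    nlinarith [mul_nonneg (hm K).le (sq_nonneg (v K - (u K + γ K * x)))]
  have := Finset.sum_le_sum fun K (_ : K ∈ Finset.univ) => hK K
  simp only [Finset.sum_add_distrib, ← Finset.mul_sum, ← Finset.sum_mul] at this
  simp only [normSq, ← Finset.mul_sum]
  have h2 : 0 ≤ 2 * d * ∑ K, (∑ L', τ K L' * (v K - v L')) * v K := by positivity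
  linarith

lemma g_growth {g₀ A : ℝ} (hA : 0 ≤ A) (m : V → ℝ) (hm : ∀ K, 0 < m K)
    (hmA : ∑ K, m K ≤ A) (hL : 0 ≤ L)
    (hg : ∀ r s : ℝ, |g r - g s| ≤ L * |r - s|) (hg0 : |g 0| ≤ g₀) (u : V → ℝ) :
    ∑ K, m K * g (u K) ^ 2 ≤ 2 * L ^ 2 * normSq m u + 2 * g₀ ^ 2 * A := by
  have hK : ∀ K, m K * g (u K) ^ 2 ≤ 2 * L ^ 2 * (m K * u K ^ 2) + 2 * g₀ ^ 2 * m K := by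
    intro K
    have h1 : |g (u K)| ≤ L * |u K| + g₀ := by
      have := hg (u K) 0
      rw [sub_zero] at this
      have h := abs_sub_abs_le_abs_sub (g (u K)) (g 0)
      linarith
    have h2 : g (u K) ^ 2 ≤ (L * |u K| + g₀) ^ 2 := by
      rw [← sq_abs]; exact pow_le_pow_left₀ (abs_nonneg _) h1 2
    have h3 : (L * |u K| + g₀) ^ 2 ≤ 2 * L ^ 2 * u K ^ 2 + 2 * g₀ ^ 2 := by
      rw [← sq_abs (u K)]
      nlinarith [sq_nonneg (L * |u K| - g₀)]
    have := mul_le_mul_of_nonneg_left (h2.trans h3) (hm K).le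
    linarith
  have := Finset.sum_le_sum fun K (_ : K ∈ Finset.univ) => hK K
  rw [Finset.sum_add_distrib, ← Finset.mul_sum, ← Finset.mul_sum] at this
  have h2 := mul_le_mul_of_nonneg_left hmA (by positivity : 0 ≤ 2 * g₀ ^ 2)
  simp only [normSq]
  linarith

end schemeLemmas

/-- **Lemma 3.4, maximal second-moment bound.** For all `T > 0`,
`L ≥ 0`, `g₀ ≥ 0`, `A > 0`, `B ≥ 0` there is a constant `C ≥ 0`, depending only on
`T, L, g₀, A, B`, such that for every scheme (with `Σ m K ≤ A`, `|g 0| ≤ g₀`,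
`E[‖u⁰‖_m²] ≤ B`): `E[max_{0≤n≤N} ‖uⁿ‖_m²] ≤ C`. -/
theorem maximal_moment_bound (T L g₀ A B : ℝ)
    (hT : 0 < T) (hL : 0 ≤ L) (hg₀ : 0 ≤ g₀) (hA : 0 < A) (hB : 0 ≤ B) :
    ∃ C : ℝ, 0 ≤ C ∧
      ∀ (V : Type) [Fintype V] [Nonempty V]
        (Ω : Type) [MeasurableSpace Ω] (g : ℝ → ℝ) (N : ℕ)
        (S : Scheme V Ω T L g N),
        |g 0| ≤ g₀ → (∑ K, S.m K) ≤ A →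
        (∫ ω, normSq S.m (S.u 0 ω) ∂S.P) ≤ B →
        (∫ ω, (Finset.range (N + 1)).sup' Finset.nonempty_range_add_one
            (fun n => normSq S.m (S.u n ω)) ∂S.P) ≤ C := by
  set c := 2 * L ^ 2 + 2 * g₀ ^ 2 * A + 1 with hcdef
  have hc : 0 ≤ c := by positivity
  have hκ : 0 ≤ kappaFour := integral_nonneg fun x => by positivity
  set D := Real.exp ((4 * c ^ 2 + 4 * c + 4 * kappaFour * c ^ 2 * T) * T) * (B + 1) with hD
  have hD0 : 0 ≤ D := by positivity
  refine ⟨B + 1 / 2 * (1 + B) + 4 * c ^ 2 * T * D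
        + T * (c * (1 / 2 * (1 + B) + 1 / 2 * D + 1)), by positivity, ?_⟩
  intro V _ _ Ω _ g N S hg hmA hB0
  haveI := S.probP
  have hN : (0 : ℝ) < N := by exact_mod_cast S.N_pos
  have hd : 0 < T / N := div_pos hT hN
  have gm : Measurable g := by
    have : LipschitzWith (Real.toNNReal L) g := LipschitzWith.of_dist_le_mul fun x y => by
      rw [Real.dist_eq, Real.dist_eq, Real.coe_toNNReal L hL]
      exact S.g_lip x y
    exact this.continuous.measurable
  have hns : ∀ n ω, 0 ≤ normSq S.m (S.u n ω) := fun n ω =>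
    Finset.sum_nonneg fun K _ => mul_nonneg (S.m_pos K).le (sq_nonneg _)
  have hgr : ∀ n ω, ∑ K, S.m K * g (S.u n ω K) ^ 2 ≤
      2 * L ^ 2 * normSq S.m (S.u n ω) + 2 * g₀ ^ 2 * A := fun n ω =>
    g_growth hA.le S.m S.m_pos hmA hL S.g_lip hg (S.u n ω)
  have huK : ∀ n, n ≤ N → ∀ K, Measurable[S.G n] (fun ω => S.u n ω K) := fun n hn K =>
    (measurable_pi_apply K).comp (S.u_meas n hn)
  have hq : 0 ≤ 2 * g₀ ^ 2 * A := by positivity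
  obtain ⟨R, hRi, hRb, hRI⟩ := abstract_max S.noise (B := B) hc hd.le
    (mul_div_cancel₀ T hN.ne') hκ hD
    (fun n ω => normSq S.m (S.u n ω))
    (fun n ω => ∑ K, 2 * (S.m K * (g (S.u n ω K) * S.u n ω K)))
    (fun n ω => ∑ K, S.m K * g (S.u n ω K) ^ 2)
    (fun n hn => by
      unfold normSq
      exact Finset.measurable_fun_sum _ fun K _ => ((huK n hn K).pow_const 2).const_mul _)
    (fun n hn => Finset.measurable_fun_sum _ fun K _ =>
      (((gm.comp (huK n hn.le K)).mul (huK n hn.le K)).const_mul _).const_mul _)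
    (fun n hn => Finset.measurable_fun_sum _ fun K _ =>
      ((gm.comp (huK n hn.le K)).pow_const 2).const_mul _)
    hns
    (fun n ω => by
      have h1 : |∑ K, 2 * (S.m K * (g (S.u n ω K) * S.u n ω K))| ≤
          ∑ K, (S.m K * g (S.u n ω K) ^ 2 + S.m K * S.u n ω K ^ 2) := by
        refine (Finset.abs_sum_le_sum_abs _ _).trans (Finset.sum_le_sum fun K _ => ?_)
        have hm := (S.m_pos K).le
        rw [abs_le]
        constructor
        · nlinarith [mul_nonneg hm (sq_nonneg (g (S.u n ω K) + S.u n ω K))]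
        · nlinarith [mul_nonneg hm (sq_nonneg (g (S.u n ω K) - S.u n ω K))]
      rw [Finset.sum_add_distrib] at h1
      have h2 := hgr n ω
      have h3 := hns n ω
      have h4 : ∑ K, S.m K * S.u n ω K ^ 2 = normSq S.m (S.u n ω) := rfl
      have h5 := mul_nonneg hq h3
      rw [h4] at h1
      rw [hcdef]
      nlinarith [sq_nonneg L])
    (fun n ω => Finset.sum_nonneg fun K _ => mul_nonneg (S.m_pos K).le (sq_nonneg _))
    (fun n ω => by
      have h2 := hgr n ω
      have h3 := hns n ω
      have h5 := mul_nonneg hq h3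
      simp only [hcdef]
      nlinarith [sq_nonneg L])
    (fun n hn => by
      filter_upwards [S.scheme n hn] with ω hω
      exact energy_step S.m S.m_pos S.τ S.τ_symm S.τ_nonneg (T / N) hd (S.u n ω)
        (S.u (n + 1) ω) (fun K => g (S.u n ω K)) (S.ΔW (n + 1) ω) hω)
    S.u0_int hB0
  refine le_trans ?_ hRI
  refine integral_mono_of_nonneg (Filter.Eventually.of_forall fun ω => ?_) hRi ?_
  · exact (hns 0 ω).trans (Finset.le_sup' (fun n => normSq S.m (S.u n ω))
      (Finset.mem_range.2 (Nat.succ_pos N)))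
  · filter_upwards [hRb] with ω hω
    exact Finset.sup'_le _ _ fun n hn => hω n (Nat.lt_succ_iff.1 (Finset.mem_range.1 hn))
end
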